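/- arXiv:2004.13774 — 6 statements merged into one kernel-verified Lean document; each statement's English description precedes it below -/
import Mathlib

section
/- Let q be a prime power and let 4 ≤ h ≤ k be integers. Then the cardinality of D_1 = { (x_1, …, x_k) ∈ 𝔽_q^k \ {0} : (x_1 + ⋯ + x_h)·x_1·x_2·⋯·x_h = 0 } equals q^{k−h−1}(q^{h+1} − (q−1)^{h+1} + (−1)^h(q−1)) − 1; equivalently, q·(#D_1 + 1) = q^{k−h}(q^{h+1} − (q−1)^{h+1} + (−1)^h(q−1)). -/
/-- Vectors with nonzero entries and nonzero sum correspond to vectors with nonzero entries and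
zero sum in one more coordinate. -/
def sumMulProdNeZeroEquiv (F : Type*) [Field F] (n : ℕ) :
    {y : Fin n → F // (∑ i, y i) * ∏ i, y i ≠ 0} ≃
      {x : Fin (n + 1) → F // ∏ i, x i ≠ 0 ∧ ∑ i, x i = 0} where
  toFun y := ⟨Fin.cons (-∑ i, y.1 i) y.1, by
    have h := y.2
    simp only [Fin.prod_univ_succ, Fin.sum_univ_succ, Fin.cons_zero, Fin.cons_succ]
    exact ⟨by simpa using h, by ring⟩⟩
  invFun x := ⟨Fin.tail x.1, by
    obtain ⟨h, h'⟩ := x.2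
    rw [Fin.prod_univ_succ] at h
    rw [Fin.sum_univ_succ] at h'
    have hs : ∑ i, Fin.tail x.1 i = -x.1 0 := by
      simp only [Fin.tail]; linear_combination h'
    rw [hs, neg_mul]
    exact neg_ne_zero.mpr h⟩
  left_inv y := by simp
  right_inv x := by
    obtain ⟨x, h, h'⟩ := x
    rw [Fin.sum_univ_succ] at h'
    have hs : -∑ i, Fin.tail x i = x 0 := by
      simp only [Fin.tail]; linear_combination -h'
    simp [hs]

theorem card_prod_ne_zero (F : Type*) [Field F] [Fintype F] (n : ℕ) :
    Nat.card {x : Fin n → F // ∏ i, x i ≠ 0} = (Fintype.card F - 1) ^ n := by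
  classical
  have e : {x : Fin n → F // ∏ i, x i ≠ 0} ≃ (Fin n → {a : F // a ≠ 0}) :=
    (Equiv.subtypeEquivRight fun x => by simp [Finset.prod_ne_zero_iff]).trans
      (Equiv.subtypePiEquivPi (p := fun _ a => a ≠ 0))
  rw [Nat.card_congr e, Nat.card_fun, Nat.card_eq_fintype_card, Nat.card_eq_fintype_card,
    Fintype.card_fin, Fintype.card_subtype_compl, Fintype.card_subtype_eq]

theorem card_mul_card_sum_mul_prod_ne_zero (F : Type*) [Field F] [Fintype F] (n : ℕ) :
    (Fintype.card F : ℤ) * Nat.card {x : Fin n → F // (∑ i, x i) * ∏ i, x i ≠ 0} =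
      ((Fintype.card F : ℤ) - 1) ^ (n + 1) - (-1) ^ n * ((Fintype.card F : ℤ) - 1) := by
  classical
  induction n with
  | zero => simp
  | succ n ih =>
    have hsplit : Nat.card {x : Fin (n + 1) → F // ∏ i, x i ≠ 0 ∧ ∑ i, x i = 0} +
        Nat.card {x : Fin (n + 1) → F // (∑ i, x i) * ∏ i, x i ≠ 0} =
        Nat.card {x : Fin (n + 1) → F // ∏ i, x i ≠ 0} := by
      simp only [Nat.card_eq_fintype_card, Fintype.card_subtype]
      rw [← Finset.card_filter_add_card_filter_not (s := {x : Fin (n + 1) → F | ∏ i, x i ≠ 0})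
        (fun x => ∑ i, x i = 0), Finset.filter_filter, Finset.filter_filter]
      congr 3
      ext x
      rw [mul_ne_zero_iff, and_comm]
    rw [← Nat.card_congr (sumMulProdNeZeroEquiv F n), card_prod_ne_zero] at hsplit
    have hsplit' := congrArg (Nat.cast : ℕ → ℤ) hsplit
    push_cast [Nat.cast_sub (Fintype.card_pos (α := F))] at hsplit'
    linear_combination (Fintype.card F : ℤ) * hsplit' - ih

theorem card_subtype_castAdd (F : Type*) [Fintype F] (h m : ℕ) (P : (Fin h → F) → Prop) :
    Nat.card {x : Fin (h + m) → F // P fun i => x (Fin.castAdd m i)} =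
      Nat.card {y // P y} * Fintype.card F ^ m := by
  have e : {x : Fin (h + m) → F // P fun i => x (Fin.castAdd m i)} ≃
      {y // P y} × (Fin m → F) :=
    ((Fin.appendEquiv h m).subtypeEquiv (p := fun z => P z.1) fun z => by
      simp [Fin.appendEquiv]).symm.trans
      (Equiv.prodSubtypeFstEquivSubtypeProd (p := P))
  rw [Nat.card_congr e, Nat.card_prod, Nat.card_fun]
  simp

theorem card_subtype_ne_and_add_one {α : Type*} [Finite α] (a : α) (P : α → Prop) (ha : P a) :
    Nat.card {x // x ≠ a ∧ P x} + 1 = Nat.card {x // P x} := by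
  change Set.ncard {x | x ≠ a ∧ P x} + 1 = Set.ncard {x | P x}
  rw [← Set.ncard_sdiff_singleton_add_one (s := {x | P x}) (a := a) ha]
  congr 2
  ext x
  simp [and_comm]

theorem stmt2 (q : ℕ) (F : Type*) [Field F] [Fintype F] (hF : Fintype.card F = q)
    (k h : ℕ) (hh : 4 ≤ h) (hhk : h ≤ k) :
    (q : ℤ) * ((Nat.card {x : Fin k → F // x ≠ 0 ∧
        (∑ i : Fin h, x (Fin.castLE hhk i)) * ∏ i : Fin h, x (Fin.castLE hhk i) = 0} : ℤ) + 1)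
      = (q : ℤ) ^ (k - h) *
        ((q : ℤ) ^ (h + 1) - ((q : ℤ) - 1) ^ (h + 1) + (-1) ^ h * ((q : ℤ) - 1)) := by
  classical
  subst hF
  obtain ⟨m, rfl⟩ := Nat.exists_eq_add_of_le hhk
  have hzero := card_subtype_ne_and_add_one (0 : Fin (h + m) → F)
    (fun x => (∑ i : Fin h, x (Fin.castLE hhk i)) * ∏ i : Fin h, x (Fin.castLE hhk i) = 0)
    (by simp)
  have hfree := card_subtype_castAdd F h m (fun y => (∑ i, y i) * ∏ i, y i = 0)
  have hcompl : Nat.card {y : Fin h → F // (∑ i, y i) * ∏ i, y i = 0} +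
      Nat.card {y : Fin h → F // (∑ i, y i) * ∏ i, y i ≠ 0} = Fintype.card F ^ h := by
    simp only [Nat.card_eq_fintype_card, Fintype.card_subtype]
    rw [Finset.card_filter_add_card_filter_not]
    simp
  have hne := card_mul_card_sum_mul_prod_ne_zero F h
  have htotal := congrArg (Nat.cast : ℕ → ℤ) (hzero.trans hfree)
  have hcompl' := congrArg (Nat.cast : ℕ → ℤ) hcompl
  push_cast at htotal hcompl'
  rw [htotal, Nat.add_sub_cancel_left]
  linear_combination (Fintype.card F : ℤ) ^ m * ((Fintype.card F : ℤ) * hcompl' - hne)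
end

section
/- Let q be a prime power, l ≥ 1 an integer, r_1, …, r_l ≥ 1 integers, α_1, …, α_l pairwise distinct elements of 𝔽_q^*, and γ ∈ 𝔽_q^*. Then the number of tuples (x^{(i)}_j)_{1 ≤ i ≤ l, 1 ≤ j ≤ r_i} with all entries in 𝔽_q^*, satisfying ∑_{i=1}^l ∑_{j=1}^{r_i} x^{(i)}_j = γ and ∑_{i=1}^l α_i (∑_{j=1}^{r_i} x^{(i)}_j) = 0, equals (ψ_{r_1+⋯+r_l} − A_{r_1,…,r_l})/(q−1). In particular this number is the same for every γ ∈ 𝔽_q^*. -/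
/-- `ψ_s = ((q-1)^s + (-1)^s (q-1))/q` (an exact integer division). -/
def psi (q s : ℕ) : ℤ := (((q : ℤ) - 1) ^ s + (-1) ^ s * ((q : ℤ) - 1)) / (q : ℤ)

/-- `φ_s = ((q-1)^s - ψ_s)/(q-1)` (an exact integer division). -/
def phi (q s : ℕ) : ℤ := (((q : ℤ) - 1) ^ s - psi q s) / ((q : ℤ) - 1)

/-- Auxiliary recursion for `A_{r_1,…,r_l}`, taking the list in reversed order
`[r_l, r_{l-1}, …, r_1]`. -/
def Arev (q : ℕ) : List ℕ → ℤ
  | [] => 0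
  | [r] => psi q r
  | r :: rs => psi q rs.sum * phi q r + (-1) ^ r * Arev q rs

/-- `A_{r_1,…,r_l}` for the list `[r_1, …, r_l]`. -/
def Atup (q : ℕ) (l : List ℕ) : ℤ := Arev q l.reverse

theorem mul_phi_and_psi_eq {q : ℕ} (hq : 2 ≤ q) (s : ℕ) :
    (q : ℤ) * phi q s = ((q : ℤ) - 1) ^ s - (-1) ^ s ∧ psi q s = phi q s + (-1) ^ s := by
  have hq' : (2 : ℤ) ≤ q := by exact_mod_cast hq
  obtain ⟨k, hk⟩ : (q : ℤ) ∣ ((q : ℤ) - 1) ^ s - (-1) ^ s := by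
    simpa using sub_dvd_pow_sub_pow ((q : ℤ) - 1) (-1) s
  have hpsi : psi q s = k + (-1) ^ s := by
    rw [psi, show ((q : ℤ) - 1) ^ s + (-1) ^ s * ((q : ℤ) - 1) = q * (k + (-1) ^ s) by
      linear_combination hk]
    exact Int.mul_ediv_cancel_left _ (by omega)
  have hphi : phi q s = k := by
    rw [phi, hpsi, show ((q : ℤ) - 1) ^ s - (k + (-1) ^ s) = ((q : ℤ) - 1) * k by
      linear_combination hk]
    exact Int.mul_ediv_cancel_left _ (by omega)
  rw [hpsi, hphi, hk]
  exact ⟨rfl, rfl⟩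

section Counting

open Finset

variable {F : Type*} [Field F] [Fintype F] [DecidableEq F]

theorem sum_units_ite_sub_mul_eq_zero {a : F} (ha : a ≠ 0) (c : F) :
    ∑ u : Fˣ, (if c - a * u = 0 then 1 else 0 : ℤ) = 1 - if c = 0 then 1 else 0 := by
  by_cases hc : c = 0
  · simp [hc, ha]
  · rw [Fintype.sum_eq_single (Units.mk0 (c / a) (div_ne_zero hc ha))]
    · simp [hc, mul_div_cancel₀ _ ha]
    · intro u hu
      rw [if_neg]
      intro h
      apply hu
      ext
      rw [Units.val_mk0, eq_div_iff ha]
      linear_combination -h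

theorem card_mul_sum_fin_ite {n : ℕ} (a : Fin n → F) (ha : ∀ i, a i ≠ 0) (c : F) :
    (Fintype.card F : ℤ) * ∑ x : Fin n → Fˣ, (if ∑ i, a i * x i = c then 1 else 0 : ℤ) =
      ((Fintype.card F : ℤ) - 1) ^ n +
        (-1) ^ n * ((Fintype.card F : ℤ) * (if c = 0 then 1 else 0) - 1) := by
  induction n generalizing c with
  | zero => simp [eq_comm]
  | succ n ih =>
    have hcard : (Fintype.card Fˣ : ℤ) = (Fintype.card F : ℤ) - 1 := by
      rw [Fintype.card_units, Nat.cast_sub Fintype.card_pos, Nat.cast_one]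
    have hstep (u : Fˣ) (y : Fin n → Fˣ) :
        (∑ i, a i * ((Fin.cons u y : Fin (n + 1) → Fˣ) i : F) = c) ↔
          ∑ i, a i.succ * (y i : F) = c - a 0 * u := by
      rw [Fin.sum_univ_succ]
      simp [eq_sub_iff_add_eq']
    rw [← (Fin.consEquiv fun _ => Fˣ).sum_comp, Fintype.sum_prod_type, mul_sum]
    simp only [Fin.consEquiv_apply, hstep]
    simp only [ih (fun i => a i.succ) fun i => ha _]
    rw [sum_add_distrib, ← mul_sum, sum_sub_distrib, ← mul_sum,
      sum_units_ite_sub_mul_eq_zero (ha 0)]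
    simp only [sum_const, card_univ, nsmul_eq_mul, hcard]
    ring

theorem sum_ite_eq_phi_add {ι : Type*} [Fintype ι] [DecidableEq ι] (a : ι → F) (ha : ∀ i, a i ≠ 0) (c : F) :
    ∑ x : ι → Fˣ, (if ∑ i, a i * x i = c then 1 else 0 : ℤ) =
      phi (Fintype.card F) (Fintype.card ι) + if c = 0 then (-1) ^ Fintype.card ι else 0 := by
  let e := Fintype.equivFin ι
  have hq : (Fintype.card F : ℤ) ≠ 0 := by simp
  have h := card_mul_sum_fin_ite (fun i => a (e.symm i)) (fun i => ha _) c
  rw [← (e.arrowCongr (Equiv.refl Fˣ)).sum_comp] at h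
  have hsum (x : ι → Fˣ) : ∑ i, a (e.symm i) * ((e.arrowCongr (Equiv.refl Fˣ) x i : Fˣ) : F) =
      ∑ i, a i * x i := by
    rw [← e.symm.sum_comp]
    rfl
  simp only [hsum] at h
  apply mul_left_cancel₀ hq
  rw [h, mul_add, (mul_phi_and_psi_eq Fintype.one_lt_card _).1]
  split_ifs <;> ring

theorem sum_blocks_ite_eq {l : ℕ} (r : Fin l → ℕ) (a : Fin l → F) (ha : ∀ i, a i ≠ 0) (c : F) :
    ∑ x : (i : Fin l) → Fin (r i) → Fˣ,
        (if ∑ i, a i * ∑ j, (x i j : F) = c then 1 else 0 : ℤ) =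
      phi (Fintype.card F) (∑ i, r i) + if c = 0 then (-1) ^ (∑ i, r i) else 0 := by
  have h := sum_ite_eq_phi_add (fun p : (i : Fin l) × Fin (r i) => a p.1) (fun p => ha _) c
  rw [← (Equiv.piCurry fun (i : Fin l) (_ : Fin (r i)) => Fˣ).symm.sum_comp] at h
  simpa [Fintype.sum_sigma, mul_sum, Sigma.uncurry] using h

/-- The number of block tuples of nonzero elements with given total and weighted sums. -/
def blockCount {l : ℕ} (r : Fin l → ℕ) (a : Fin l → F) (c d : F) : ℤ :=
  ∑ x : (i : Fin l) → Fin (r i) → Fˣ,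
    if ∑ i, ∑ j, (x i j : F) = c ∧ ∑ i, a i * ∑ j, (x i j : F) = d then 1 else 0

theorem blockCount_succ {l : ℕ} (r : Fin (l + 1) → ℕ) (a : Fin (l + 1) → F)
    (ha : Function.Injective a) :
    blockCount r a 0 0 =
      psi (Fintype.card F) (∑ i : Fin l, r i.castSucc) * phi (Fintype.card F) (r (Fin.last l)) +
        (-1) ^ r (Fin.last l) *
          blockCount (fun i => r (Fin.castSucc i)) (fun i => a i.castSucc) 0 0 := by
  have hcond (z : Fin (r (Fin.last l)) → Fˣ) (y : (i : Fin l) → Fin (r i.castSucc) → Fˣ) :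
      (if ∑ i, ∑ j, ((Fin.snoc (α := fun i => Fin (r i) → Fˣ) y z i j : Fˣ) : F) = 0 ∧
          ∑ i, a i * ∑ j, ((Fin.snoc (α := fun i => Fin (r i) → Fˣ) y z i j : Fˣ) : F) = 0
        then 1 else 0 : ℤ) =
      (if ∑ i, (a (Fin.castSucc i) - a (Fin.last l)) * ∑ j, (y i j : F) = 0 then 1 else 0) *
        (if ∑ j, (z j : F) = -∑ i, ∑ j, (y i j : F) then 1 else 0) := by
    simp only [Fin.sum_univ_castSucc, Fin.snoc_castSucc, Fin.snoc_last]
    simp only [sub_mul, sum_sub_distrib, ← mul_sum]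
    rw [ite_zero_mul_ite_zero, mul_one]
    refine if_congr ⟨fun ⟨h₁, h₂⟩ => ⟨?_, ?_⟩, fun ⟨h₁, h₂⟩ => ⟨?_, ?_⟩⟩ rfl rfl
    · linear_combination h₂ - a (Fin.last l) * h₁
    · linear_combination h₁
    · linear_combination h₂
    · linear_combination h₁ + a (Fin.last l) * h₂
  have hprod (y : (i : Fin l) → Fin (r i.castSucc) → Fˣ) :
      (if ∑ i, (a (Fin.castSucc i) - a (Fin.last l)) * ∑ j, (y i j : F) = 0 then 1 else 0 : ℤ) *
        (phi (Fintype.card F) (r (Fin.last l)) +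
          if -∑ i, ∑ j, (y i j : F) = 0 then (-1) ^ r (Fin.last l) else 0) =
      (if ∑ i, (a (Fin.castSucc i) - a (Fin.last l)) * ∑ j, (y i j : F) = 0 then 1 else 0) *
        phi (Fintype.card F) (r (Fin.last l)) +
      (-1) ^ r (Fin.last l) * (if ∑ i, ∑ j, (y i j : F) = 0 ∧
        ∑ i, a (Fin.castSucc i) * ∑ j, (y i j : F) = 0 then 1 else 0) := by
    simp only [sub_mul, sum_sub_distrib, ← mul_sum, neg_eq_zero]
    by_cases h : ∑ i, ∑ j, (y i j : F) = 0 <;> simp [h]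
    split_ifs <;> ring
  have hne (i : Fin l) : a i.castSucc - a (Fin.last l) ≠ 0 :=
    sub_ne_zero.2 fun h => (Fin.castSucc_lt_last i).ne (ha h)
  have hlast := sum_ite_eq_phi_add (fun _ : Fin (r (Fin.last l)) => (1 : F))
    fun _ => one_ne_zero
  simp only [one_mul, Fintype.card_fin] at hlast
  rw [blockCount, ← (Fin.snocEquiv fun i => Fin (r i) → Fˣ).sum_comp, Fintype.sum_prod_type,
    sum_comm]
  simp only [Fin.snocEquiv_apply, hcond, ← mul_sum, hlast, hprod]
  rw [sum_add_distrib, ← sum_mul, sum_blocks_ite_eq _ _ hne, ← mul_sum, if_pos rfl,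
    ← (mul_phi_and_psi_eq Fintype.one_lt_card _).2, blockCount]

theorem Arev_cons {q : ℕ} (hq : 2 ≤ q) (s : ℕ) (L : List ℕ) :
    Arev q (s :: L) = psi q L.sum * phi q s + (-1) ^ s * (if L = [] then 1 else Arev q L) := by
  cases L with
  | nil =>
    have h0 : psi q 0 = 1 := by
      simpa [psi] using Int.ediv_self (show (q : ℤ) ≠ 0 by omega)
    simp [Arev, h0, (mul_phi_and_psi_eq hq s).2]
  | cons t L => simp [Arev]

theorem blockCount_zero_zero {l : ℕ} (r : Fin l → ℕ) (a : Fin l → F)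
    (ha : Function.Injective a) :
    blockCount r a 0 0 =
      if (List.ofFn r).reverse = [] then 1 else Arev (Fintype.card F) (List.ofFn r).reverse := by
  induction l with
  | zero => simp [blockCount]
  | succ l ih =>
    rw [blockCount_succ r a ha, ih _ (fun i => a i.castSucc) (ha.comp (Fin.castSucc_injective l)),
      List.ofFn_succ',
      List.concat_eq_append, List.reverse_append, List.reverse_singleton, List.singleton_append,
      if_neg (List.cons_ne_nil _ _), Arev_cons Fintype.one_lt_card, List.sum_reverse,
      List.sum_ofFn]

theorem blockCount_smul {l : ℕ} (r : Fin l → ℕ) (a : Fin l → F) (c : F) (u : Fˣ) :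
    blockCount r a (u * c) 0 = blockCount r a c 0 := by
  rw [blockCount, blockCount,
    ← Equiv.sum_comp (Equiv.mulLeft fun (i : Fin l) (_ : Fin (r i)) => u)]
  simp [← mul_sum, mul_left_comm (a _)]

theorem sum_blockCount {l : ℕ} (r : Fin l → ℕ) (a : Fin l → F) (ha : ∀ i, a i ≠ 0) :
    ∑ c, blockCount r a c 0 = psi (Fintype.card F) (∑ i, r i) := by
  simp only [blockCount]
  rw [sum_comm, (mul_phi_and_psi_eq Fintype.one_lt_card _).2]
  simp only [ite_and, sum_ite_eq, mem_univ, if_true, sum_blocks_ite_eq r a ha]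

theorem blockCount_mul {l : ℕ} (r : Fin l → ℕ) (a : Fin l → F) (ha : ∀ i, a i ≠ 0)
    {c : F} (hc : c ≠ 0) :
    blockCount r a c 0 * ((Fintype.card F : ℤ) - 1) =
      psi (Fintype.card F) (∑ i, r i) - blockCount r a 0 0 := by
  have hconst : ∀ b ∈ univ.erase (0 : F), blockCount r a b 0 = blockCount r a c 0 := by
    intro b hb
    simpa [hc] using
      blockCount_smul r a c (Units.mk0 (b / c) (div_ne_zero (ne_of_mem_erase hb) hc))
  rw [← sum_blockCount r a ha, ← add_sum_erase _ _ (mem_univ (0 : F)), sum_congr rfl hconst,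
    sum_const, card_erase_of_mem (mem_univ _), card_univ, nsmul_eq_mul,
    Nat.cast_sub Fintype.card_pos]
  push_cast
  ring

theorem natCard_eq_blockCount {l : ℕ} (r : Fin l → ℕ) (a : Fin l → F) (c d : F) :
    (Nat.card {x : (i : Fin l) → Fin (r i) → F //
      (∀ i j, x i j ≠ 0) ∧ (∑ i, ∑ j, x i j) = c ∧ (∑ i, a i * ∑ j, x i j) = d} : ℤ) =
      blockCount r a c d := by
  let e : {x : (i : Fin l) → Fin (r i) → F //
      (∀ i j, x i j ≠ 0) ∧ (∑ i, ∑ j, x i j) = c ∧ (∑ i, a i * ∑ j, x i j) = d} ≃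
      {x : (i : Fin l) → Fin (r i) → Fˣ //
        (∑ i, ∑ j, (x i j : F)) = c ∧ (∑ i, a i * ∑ j, (x i j : F)) = d} :=
    { toFun x := ⟨fun i j => Units.mk0 (x.1 i j) (x.2.1 i j), x.2.2⟩
      invFun x := ⟨fun i j => x.1 i j, fun i j => (x.1 i j).ne_zero, x.2⟩
      left_inv x := rfl
      right_inv x := by
        ext i j
        rfl }
  rw [Nat.card_congr e, Nat.card_eq_fintype_card, Fintype.card_subtype, blockCount, sum_boole]

end Counting

theorem stmt5 (q : ℕ) (F : Type*) [Field F] [Fintype F] (hF : Fintype.card F = q)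
    (l : ℕ) (hl : 1 ≤ l) (r : Fin l → ℕ) (hr : ∀ i, 1 ≤ r i)
    (α : Fin l → F) (hαinj : Function.Injective α) (hα0 : ∀ i, α i ≠ 0)
    (γ : F) (hγ : γ ≠ 0) :
    (Nat.card {x : (i : Fin l) → Fin (r i) → F //
        (∀ i j, x i j ≠ 0) ∧ (∑ i, ∑ j, x i j) = γ ∧ (∑ i, α i * ∑ j, x i j) = 0} : ℤ)
        * ((q : ℤ) - 1)
      = psi q (∑ i, r i) - Atup q (List.ofFn r) := by
  classical
  subst hF
  rw [natCard_eq_blockCount, blockCount_mul r α hα0 hγ, blockCount_zero_zero r α hαinj, Atup,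
    if_neg]
  simpa [List.ofFn_eq_nil_iff] using Nat.one_le_iff_ne_zero.1 hl
end

section
/- Let q be a prime power and let 4 ≤ h ≤ k be integers. Let f(x) = a_1x_1 + ⋯ + a_hx_h be a nonzero linear form on 𝔽_q^k supported on the first h coordinates, and suppose that the nonzero coefficients among a_1, …, a_h take exactly l distinct values, with multiplicities r_1, …, r_l (so s := r_1 + ⋯ + r_l ≥ 1 is the number of nonzero coefficients and s ≤ h). Then the number of x = (x_1, …, x_k) ∈ 𝔽_q^k satisfying both f(x) = 0 and (x_1 + ⋯ + x_h)·x_1·⋯·x_h = 0 equals q^{k−1} − (q−1)^{h−s}·q^{k−h}·ψ_s + q^{k−h}·A_{r_1,…,r_l,h−s}. -/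
open Finset

theorem AddChar.map_sum_eq_prod_map {A M ι : Type*} [AddCommMonoid A] [CommMonoid M]
    (χ : AddChar A M) (s : Finset ι) (f : ι → A) :
    χ (∑ i ∈ s, f i) = ∏ i ∈ s, χ (f i) := by
  classical
  induction s using Finset.induction_on with
  | empty => simp
  | insert i s hi ih => rw [sum_insert hi, prod_insert hi, χ.map_add_eq_mul, ih]

theorem AddChar.IsPrimitive.sum_erase_zero {F K : Type*} [Field F] [Fintype F] [DecidableEq F]
    [Field K] {χ : AddChar F K} (hχ : χ.IsPrimitive) (t : F) :
    ∑ y ∈ univ.erase 0, χ (t * y) = if t = 0 then (Fintype.card F : K) - 1 else -1 := by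
  have h := AddChar.sum_mulShift t hχ
  simp_rw [mul_comm _ t] at h
  rw [← add_sum_erase univ _ (mem_univ 0)] at h
  simp only [mul_zero, AddChar.map_zero_eq_one] at h
  split_ifs with ht
  · rw [if_pos ht] at h
    linear_combination h
  · rw [if_neg ht, Nat.cast_zero] at h
    linear_combination h

theorem AddChar.IsPrimitive.card_sq_mul_card {F K ι : Type*} [Field F] [Fintype F] [DecidableEq F]
    [Field K] [Fintype ι] [DecidableEq ι] {χ : AddChar F K} (hχ : χ.IsPrimitive)
    (b c : ι → F) (S : ι → Finset F) :
    (Fintype.card F : K) ^ 2 *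
        #{x ∈ Fintype.piFinset S | ∑ i, b i * x i = 0 ∧ ∑ i, c i * x i = 0} =
      ∑ u, ∑ v, ∏ i, ∑ y ∈ S i, χ ((u * b i + v * c i) * y) := by
  have hprod (u v : F) : ∏ i, ∑ y ∈ S i, χ ((u * b i + v * c i) * y) =
      ∑ x ∈ Fintype.piFinset S, χ (u * ∑ i, b i * x i) * χ (v * ∑ i, c i * x i) := by
    rw [prod_univ_sum]
    refine sum_congr rfl fun x _ => ?_
    rw [← AddChar.map_add_eq_mul, mul_sum, mul_sum, ← sum_add_distrib, χ.map_sum_eq_prod_map]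
    exact prod_congr rfl fun i _ => by ring_nf
  have hsum (x : ι → F) :
      ∑ u, ∑ v, χ (u * ∑ i, b i * x i) * χ (v * ∑ i, c i * x i) =
        if ∑ i, b i * x i = 0 ∧ ∑ i, c i * x i = 0 then (Fintype.card F : K) ^ 2 else 0 := by
    rw [← sum_mul_sum, AddChar.sum_mulShift _ hχ, AddChar.sum_mulShift _ hχ]
    split_ifs <;> simp_all [sq]
  simp_rw [hprod]
  rw [sum_congr rfl fun u _ => sum_comm, sum_comm, sum_congr rfl fun x _ => hsum x, ← sum_filter,
    sum_const, nsmul_eq_mul, mul_comm]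

/-- The number of common zeros of two linear forms, with the coordinates in `I` nonzero. -/
theorem card_sq_mul_card_common_zeros {F ι : Type*} [Field F] [Fintype F] [DecidableEq F]
    [Fintype ι] [DecidableEq ι] (b c : ι → F) (I : Finset ι) :
    (Fintype.card F : ℤ) ^ 2 *
        #{x : ι → F | (∀ i ∈ I, x i ≠ 0) ∧ ∑ i, b i * x i = 0 ∧ ∑ i, c i * x i = 0} =
      ∑ u, ∑ v, ∏ i, if u * b i + v * c i = 0
        then (if i ∈ I then (Fintype.card F : ℤ) - 1 else Fintype.card F)
        else (if i ∈ I then -1 else 0) := by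
  have hchar : ringChar ℚ ≠ ringChar F := by
    rw [ringChar.eq_zero]
    exact (CharP.ringChar_ne_zero_of_finite F).symm
  let χ := AddChar.FiniteField.primitiveChar F ℚ hchar
  have h := χ.prim.card_sq_mul_card b c fun i => if i ∈ I then univ.erase 0 else univ
  have hset : (({x ∈ Fintype.piFinset fun i => if i ∈ I then univ.erase (0 : F) else univ |
        ∑ i, b i * x i = 0 ∧ ∑ i, c i * x i = 0}) : Finset (ι → F)) =
      ({x : ι → F | (∀ i ∈ I, x i ≠ 0) ∧ ∑ i, b i * x i = 0 ∧ ∑ i, c i * x i = 0} :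
        Finset (ι → F)) := by
    ext x
    simp only [mem_filter, Fintype.mem_piFinset, mem_univ, true_and]
    refine and_congr_left fun _ => forall_congr' fun i => ?_
    by_cases hi : i ∈ I <;> simp [hi]
  have hterm (i : ι) (t : F) : ∑ y ∈ (if i ∈ I then univ.erase (0 : F) else univ), χ.char (t * y) =
      ((if t = 0 then (if i ∈ I then (Fintype.card F : ℤ) - 1 else Fintype.card F)
        else (if i ∈ I then -1 else 0) : ℤ) : CyclotomicField χ.n ℚ) := by
    by_cases hi : i ∈ I
    · simp only [if_pos hi, χ.prim.sum_erase_zero]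
      push_cast
      rfl
    · have := AddChar.sum_mulShift t χ.prim
      simp_rw [mul_comm _ t] at this
      simp only [if_neg hi, this]
      push_cast
      rfl
  rw [hset] at h
  simp_rw [hterm] at h
  exact_mod_cast h

theorem card_mul_card_zeros {F ι : Type*} [Field F] [Fintype F] [DecidableEq F]
    [Fintype ι] [DecidableEq ι] (b : ι → F) (I : Finset ι) :
    (Fintype.card F : ℤ) *
        #{x : ι → F | (∀ i ∈ I, x i ≠ 0) ∧ ∑ i, b i * x i = 0} =
      ∑ u, ∏ i, if u * b i = 0
        then (if i ∈ I then (Fintype.card F : ℤ) - 1 else Fintype.card F)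
        else (if i ∈ I then -1 else 0) := by
  have h := card_sq_mul_card_common_zeros b 0 I
  simp only [Pi.zero_apply, zero_mul, mul_zero, sum_const_zero, and_true, add_zero, sum_const,
    card_univ, nsmul_eq_mul, ← mul_sum] at h
  have hq : (Fintype.card F : ℤ) ≠ 0 := by exact_mod_cast Fintype.card_ne_zero
  apply mul_left_cancel₀ hq
  linear_combination h

theorem prod_ite_mem_eq_card_compl_pow_mul {ι : Type*} [Fintype ι] [DecidableEq ι] (I : Finset ι)
    (p : ι → Prop) [DecidablePred p] (hp : ∀ i ∉ I, p i) (q : ℤ) :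
    (∏ i, if p i then (if i ∈ I then q - 1 else q) else (if i ∈ I then -1 else 0)) =
      q ^ #Iᶜ * ((-1) ^ #I * (1 - q) ^ #{i ∈ I | p i}) := by
  rw [← prod_compl_mul_prod I]
  congr 1
  · rw [← prod_const]
    refine prod_congr rfl fun i hi => ?_
    rw [mem_compl] at hi
    rw [if_pos (hp i hi), if_neg hi]
  · rw [← prod_const, ← prod_const, prod_filter, ← prod_mul_distrib]
    refine prod_congr rfl fun i hi => ?_
    simp only [if_pos hi]
    split_ifs <;> ring

theorem card_mul_card_zeros_of_ne_zero {F ι : Type*} [Field F] [Fintype F] [DecidableEq F]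
    [Fintype ι] [DecidableEq ι] (b : ι → F) (hb : b ≠ 0) :
    (Fintype.card F : ℤ) * #{x : ι → F | ∑ i, b i * x i = 0} =
      (Fintype.card F : ℤ) ^ Fintype.card ι := by
  obtain ⟨i, hi⟩ := Function.ne_iff.mp hb
  have h := card_mul_card_zeros b ∅
  simp only [notMem_empty, false_imp_iff, implies_true, true_and, if_false] at h
  rw [h, Fintype.sum_eq_single 0 fun u hu => prod_eq_zero (mem_univ i) (if_neg (mul_ne_zero hu hi))]
  simp

theorem card_mul_card_zeros_of_support {F ι : Type*} [Field F] [Fintype F] [DecidableEq F]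
    [Fintype ι] [DecidableEq ι] (b : ι → F) (I : Finset ι) (hb : ∀ i ∉ I, b i = 0) :
    (Fintype.card F : ℤ) * #{x : ι → F | (∀ i ∈ I, x i ≠ 0) ∧ ∑ i, b i * x i = 0} =
      (Fintype.card F : ℤ) ^ #Iᶜ * (-1) ^ #I * ((1 - (Fintype.card F : ℤ)) ^ #I +
        ((Fintype.card F : ℤ) - 1) * (1 - (Fintype.card F : ℤ)) ^ #{i ∈ I | b i = 0}) := by
  rw [card_mul_card_zeros, ← add_sum_erase univ _ (mem_univ 0)]
  rw [sum_congr rfl fun u hu => by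
    rw [prod_ite_mem_eq_card_compl_pow_mul I (fun i => u * b i = 0) (by simp +contextual [hb])]]
  rw [prod_ite_mem_eq_card_compl_pow_mul I (fun i => 0 * b i = 0) (by simp)]
  have h (u : F) (hu : u ∈ univ.erase 0) : #{i ∈ I | u * b i = 0} = #{i ∈ I | b i = 0} := by
    simp [ne_of_mem_erase hu]
  rw [sum_congr rfl fun u hu => by rw [h u hu], sum_const, card_erase_of_mem (mem_univ _),
    card_univ, nsmul_eq_mul, Nat.cast_sub Fintype.card_pos]
  simp only [zero_mul, filter_true, Nat.cast_one]
  ring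

theorem card_sq_mul_card_common_zeros_of_support {F ι : Type*} [Field F] [Fintype F]
    [DecidableEq F] [Fintype ι] [DecidableEq ι] (b : ι → F) (I : Finset ι)
    (hb : ∀ i ∉ I, b i = 0) :
    (Fintype.card F : ℤ) ^ 2 *
        #{x : ι → F | (∀ i ∈ I, x i ≠ 0) ∧ ∑ i, b i * x i = 0 ∧ ∑ i ∈ I, x i = 0} =
      (Fintype.card F : ℤ) ^ #Iᶜ * (((Fintype.card F : ℤ) - 1) ^ #I +
        ((Fintype.card F : ℤ) - 1) * (-1) ^ #I *
          (∑ v, ((1 - (Fintype.card F : ℤ)) ^ #{i ∈ I | b i = v} - 1) + Fintype.card F + 1)) := by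
  have h := card_sq_mul_card_common_zeros b (fun i => if i ∈ I then 1 else 0) I
  simp only [ite_mul, one_mul, zero_mul, sum_ite_mem, univ_inter] at h
  rw [h]
  rw [sum_congr rfl fun u _ => sum_congr rfl fun v _ => by
    rw [prod_ite_mem_eq_card_compl_pow_mul I (fun i => u * b i + v * (if i ∈ I then 1 else 0) = 0)
      (by simp +contextual [hb])]]
  have hu (u : F) (hu : u ∈ univ.erase 0) :
      ∑ v, (1 - (Fintype.card F : ℤ)) ^ #{i ∈ I | u * b i + v * (if i ∈ I then 1 else 0) = 0} =
        ∑ v, (1 - (Fintype.card F : ℤ)) ^ #{i ∈ I | b i = v} := by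
    have hu0 := ne_of_mem_erase hu
    refine (Fintype.sum_equiv (Equiv.mulLeft₀ (-u) (neg_ne_zero.mpr hu0)) _ _ fun v => ?_).symm
    congr 2
    refine filter_congr fun i hi => ?_
    rw [if_pos hi, Equiv.mulLeft₀_apply]
    rw [show u * b i + -u * v * 1 = u * (b i - v) by ring, mul_eq_zero, sub_eq_zero]
    simp [hu0]
  have hzero :
      ∑ v, (1 - (Fintype.card F : ℤ)) ^ #{i ∈ I | 0 * b i + v * (if i ∈ I then 1 else 0) = 0} =
        (1 - (Fintype.card F : ℤ)) ^ #I + (Fintype.card F - 1) := by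
    have hcard (v : F) : #{i ∈ I | 0 * b i + v * (if i ∈ I then 1 else 0) = 0} =
        if v = 0 then #I else 0 := by
      split_ifs with hv
      · simp [hv]
      · rw [card_eq_zero, filter_eq_empty_iff]
        intro i hi
        simp [hv]
    simp_rw [hcard]
    rw [← add_sum_erase univ _ (mem_univ 0), sum_congr rfl fun v hv => by
      rw [if_neg (ne_of_mem_erase hv), pow_zero]]
    simp [card_erase_of_mem, Nat.cast_sub Fintype.card_pos]
  simp_rw [← mul_sum]
  rw [← add_sum_erase univ _ (mem_univ 0), hzero, sum_congr rfl hu, sum_const,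
    card_erase_of_mem (mem_univ _), card_univ, nsmul_eq_mul, Nat.cast_sub Fintype.card_pos,
    sum_sub_distrib, sum_const, card_univ]
  have hneg : ((Fintype.card F : ℤ) - 1) ^ #I = (-1) ^ #I * (1 - (Fintype.card F : ℤ)) ^ #I := by
    rw [← mul_pow]; ring
  rw [hneg]
  simp only [nsmul_eq_mul, mul_one, Nat.cast_one]
  ring

/-- A sum over a finite type supported on `0` and the range of an injective family. -/
theorem Fintype.sum_eq_zero_add_sum_comp {F M κ : Type*} [Fintype F] [DecidableEq F] [Zero F]
    [AddCommMonoid M] [Fintype κ] (α : κ → F) (hα : Function.Injective α) (hα0 : ∀ m, α m ≠ 0)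
    (g : F → M) (hg : ∀ v, v ≠ 0 → (∀ m, v ≠ α m) → g v = 0) :
    ∑ v, g v = g 0 + ∑ m, g (α m) := by
  rw [← add_sum_erase univ _ (mem_univ 0)]
  congr 1
  rw [← sum_image (s := univ) (g := α) (f := g) hα.injOn]
  refine (Finset.sum_subset (fun v hv => ?_) fun v hv hv' => ?_).symm
  · obtain ⟨m, -, rfl⟩ := mem_image.mp hv
    exact mem_erase.mpr ⟨hα0 m, mem_univ _⟩
  · exact hg v (ne_of_mem_erase hv) fun m hm => hv' (mem_image.mpr ⟨m, mem_univ _, hm.symm⟩)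

theorem dvd_pow_sub_neg_one_pow (q s : ℕ) : (q : ℤ) ∣ ((q : ℤ) - 1) ^ s - (-1) ^ s := by
  simpa using sub_dvd_pow_sub_pow ((q : ℤ) - 1) (-1) s

theorem mul_psi (q s : ℕ) :
    (q : ℤ) * psi q s = ((q : ℤ) - 1) ^ s + (-1) ^ s * ((q : ℤ) - 1) := by
  refine Int.mul_ediv_cancel' ?_
  have h := dvd_add (dvd_pow_sub_neg_one_pow q s) (dvd_mul_left (q : ℤ) ((-1) ^ s))
  rwa [show ((q : ℤ) - 1) ^ s - (-1) ^ s + (-1) ^ s * (q : ℤ) =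
    ((q : ℤ) - 1) ^ s + (-1) ^ s * ((q : ℤ) - 1) by ring] at h

theorem mul_phi (q s : ℕ) (hq : 2 ≤ q) :
    (q : ℤ) * phi q s = ((q : ℤ) - 1) ^ s - (-1) ^ s := by
  obtain ⟨d, hd⟩ := dvd_pow_sub_neg_one_pow q s
  have hq0 : (q : ℤ) ≠ 0 := by positivity
  have h : ((q : ℤ) - 1) ^ s - psi q s = ((q : ℤ) - 1) * d := by
    apply mul_left_cancel₀ hq0
    rw [mul_sub, mul_psi]
    linear_combination ((q : ℤ) - 1) * hd
  rw [phi, h, Int.mul_ediv_cancel_left _ (by lia), hd]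

theorem sq_mul_Arev (q : ℕ) (hq : 2 ≤ q) (L : List ℕ) (hL : L ≠ []) :
    (q : ℤ) ^ 2 * Arev q L = ((q : ℤ) - 1) ^ L.sum + ((q : ℤ) - 1) * (-1) ^ L.sum *
      ((L.map fun r => (1 - (q : ℤ)) ^ r - 1).sum + q + 1) := by
  have hneg (r : ℕ) : (1 - (q : ℤ)) ^ r = (-1) ^ r * ((q : ℤ) - 1) ^ r := by
    rw [← mul_pow]; ring
  have hsq (r : ℕ) : ((-1 : ℤ) ^ r) * (-1) ^ r = 1 := by
    rw [← mul_pow]; simp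
  match L with
  | [r] =>
    simp only [Arev, List.sum_cons, List.sum_nil, List.map_cons, List.map_nil, hneg, add_zero]
    linear_combination (q : ℤ) * mul_psi q r - ((q : ℤ) - 1) * ((q : ℤ) - 1) ^ r * hsq r
  | r :: t :: L =>
    have ih := sq_mul_Arev q hq (t :: L) (by simp)
    have hrec : Arev q (r :: t :: L) =
        psi q (t :: L).sum * phi q r + (-1) ^ r * Arev q (t :: L) := rfl
    generalize t :: L = M at *
    have hpsi := mul_psi q M.sum
    have hphi := mul_phi q r hq
    rw [hrec, List.sum_cons, List.map_cons, List.sum_cons, hneg, pow_add, pow_add]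
    linear_combination (-1) ^ r * ih + (q : ℤ) * phi q r * hpsi +
      (((q : ℤ) - 1) ^ M.sum + (-1) ^ M.sum * ((q : ℤ) - 1)) * hphi
      - (-1) ^ M.sum * ((q : ℤ) - 1) * ((q : ℤ) - 1) ^ r * hsq r

theorem card_zeros_and_mul_eq_zero_add {F : Type*} [Field F] [Fintype F] [DecidableEq F]
    {ι : Type*} [Fintype ι] [DecidableEq ι] (b : ι → F) (I : Finset ι) :
    #{x : ι → F | ∑ i, b i * x i = 0 ∧ (∑ i ∈ I, x i) * ∏ i ∈ I, x i = 0} +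
        #{x : ι → F | (∀ i ∈ I, x i ≠ 0) ∧ ∑ i, b i * x i = 0} =
      #{x : ι → F | ∑ i, b i * x i = 0} +
        #{x : ι → F | (∀ i ∈ I, x i ≠ 0) ∧ ∑ i, b i * x i = 0 ∧ ∑ i ∈ I, x i = 0} := by
  rw [← card_union_add_card_inter, ← filter_or, ← filter_and]
  simp_rw [mul_eq_zero, prod_eq_zero_iff]
  congr 2 <;> refine filter_congr fun x _ => ?_
  · by_cases h : ∃ i ∈ I, x i = 0
    · simp [h]
    · have : ∀ i ∈ I, x i ≠ 0 := fun i hi h0 => h ⟨i, hi, h0⟩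
      tauto
  · have : (∀ i ∈ I, x i ≠ 0) ↔ ¬ ∃ i ∈ I, x i = 0 := by push Not; rfl
    tauto

theorem stmt6 (q : ℕ) (F : Type*) [Field F] [Fintype F] (hF : Fintype.card F = q)
    (k h : ℕ) (hh : 4 ≤ h) (hhk : h ≤ k)
    (a : Fin k → F) (hane : ∃ i, a i ≠ 0) (hsupp : ∀ i : Fin k, h ≤ (i : ℕ) → a i = 0)
    (l : ℕ) (hl : 1 ≤ l) (α : Fin l → F) (hαinj : Function.Injective α) (hα0 : ∀ i, α i ≠ 0)
    (hcover : ∀ i : Fin k, a i ≠ 0 → ∃ m, a i = α m)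
    (r : Fin l → ℕ) (hr : ∀ m, r m = Nat.card {i : Fin k // a i = α m}) (hr1 : ∀ m, 1 ≤ r m)
    (s : ℕ) (hs : s = ∑ m, r m) (hs1 : 1 ≤ s) (hsh : s ≤ h) :
    (Nat.card {x : Fin k → F // (∑ i, a i * x i = 0) ∧
        (∑ i : Fin h, x (Fin.castLE hhk i)) * ∏ i : Fin h, x (Fin.castLE hhk i) = 0} : ℤ)
      = (q : ℤ) ^ (k - 1) - ((q : ℤ) - 1) ^ (h - s) * (q : ℤ) ^ (k - h) * psi q s
          + (q : ℤ) ^ (k - h) * Atup q (List.ofFn r ++ [h - s]) := by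
  classical
  subst hF
  let I : Finset (Fin k) := univ.map (Fin.castLEEmb hhk)
  have hcardI : #I = h := by simp [I]
  have hcardIc : #Iᶜ = k - h := by rw [card_compl, hcardI, Fintype.card_fin]
  have hI (i : Fin k) (hi : i ∉ I) : a i = 0 := by
    refine hsupp i (not_lt.mp fun hlt => hi ?_)
    exact mem_map.mpr ⟨⟨i, hlt⟩, mem_univ _, Fin.ext rfl⟩
  have hrα (m : Fin l) : #{i ∈ I | a i = α m} = r m := by
    rw [hr, Nat.card_eq_fintype_card, Fintype.card_subtype]
    congr 1
    ext i
    simp only [mem_filter, mem_univ, true_and, and_iff_right_iff_imp]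
    exact fun hi => by_contra fun hiI => hα0 m (hi ▸ hI i hiI)
  have hempty (v : F) (hv : v ≠ 0) (hvα : ∀ m, v ≠ α m) : #{i ∈ I | a i = v} = 0 := by
    rw [card_eq_zero, filter_eq_empty_iff]
    rintro i - rfl
    obtain ⟨m, hm⟩ := hcover i hv
    exact hvα m hm
  have hn0 : #{i ∈ I | a i = 0} = h - s := by
    have hfib := card_eq_sum_card_fiberwise (s := I) (t := univ) (f := a) (by simp)
    rw [Fintype.sum_eq_zero_add_sum_comp α hαinj hα0 _ hempty, hcardI] at hfib
    simp_rw [hrα, ← hs] at hfib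
    lia
  have hsum : ∑ v, ((1 - (Fintype.card F : ℤ)) ^ #{i ∈ I | a i = v} - 1) =
      ((1 - (Fintype.card F : ℤ)) ^ (h - s) - 1) +
        ∑ m, ((1 - (Fintype.card F : ℤ)) ^ r m - 1) := by
    rw [Fintype.sum_eq_zero_add_sum_comp α hαinj hα0 _
      fun v hv hvα => by rw [hempty v hv hvα, pow_zero, sub_self], hn0]
    simp_rw [hrα]
  have hA := sq_mul_Arev (Fintype.card F) Fintype.one_lt_card (List.ofFn r ++ [h - s]).reverse
    (by simp)
  rw [List.sum_reverse, List.map_reverse, List.sum_reverse, ← Atup] at hA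
  simp only [List.sum_append, List.map_append, List.map_cons, List.map_nil, List.sum_cons,
    List.sum_nil, List.sum_ofFn, List.map_ofFn, Function.comp_apply, add_zero, ← hs,
    Nat.add_sub_cancel' hsh] at hA
  have hcount := card_zeros_and_mul_eq_zero_add a I
  have hplane := card_mul_card_zeros_of_ne_zero a (Function.ne_iff.mpr hane)
  have hnz := card_mul_card_zeros_of_support a I hI
  have hboth := card_sq_mul_card_common_zeros_of_support a I hI
  rw [hcardIc, hcardI, hn0] at hnz
  rw [hcardIc, hcardI, hsum] at hboth
  have hset : Nat.card {x : Fin k → F // (∑ i, a i * x i = 0) ∧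
      (∑ i : Fin h, x (Fin.castLE hhk i)) * ∏ i : Fin h, x (Fin.castLE hhk i) = 0} =
      #{x : Fin k → F | ∑ i, a i * x i = 0 ∧ (∑ i ∈ I, x i) * ∏ i ∈ I, x i = 0} := by
    rw [Nat.card_eq_fintype_card, Fintype.card_subtype]
    simp [I]
  have hq : (Fintype.card F : ℤ) ≠ 0 := by exact_mod_cast Fintype.card_ne_zero
  have hpsi := mul_psi (Fintype.card F) s
  have hk : (Fintype.card F : ℤ) ^ k = Fintype.card F * (Fintype.card F : ℤ) ^ (k - 1) := by
    rw [← pow_succ', Nat.sub_add_cancel (by lia)]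
  rw [Fintype.card_fin, hk] at hplane
  have hneg (n : ℕ) :
      (1 - (Fintype.card F : ℤ)) ^ n = (-1) ^ n * ((Fintype.card F : ℤ) - 1) ^ n := by
    rw [← mul_pow]; ring
  have hplane' := mul_left_cancel₀ hq hplane
  have hboth' := mul_left_cancel₀ (pow_ne_zero 2 hq) (hboth.trans
    (c := (Fintype.card F : ℤ) ^ 2 * ((Fintype.card F : ℤ) ^ (k - h) *
      Atup (Fintype.card F) (List.ofFn r ++ [h - s])))
    (by linear_combination -(Fintype.card F : ℤ) ^ (k - h) * hA))
  have hnz' := mul_left_cancel₀ hq (hnz.trans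
    (c := (Fintype.card F : ℤ) * (((Fintype.card F : ℤ) - 1) ^ (h - s) *
      (Fintype.card F : ℤ) ^ (k - h) * psi (Fintype.card F) s)) (by
    obtain ⟨t, rfl⟩ := Nat.exists_eq_add_of_le hsh
    have hsq (n : ℕ) : (-1 : ℤ) ^ n * (-1) ^ n = 1 := by rw [← mul_pow]; simp
    rw [Nat.add_sub_cancel_left, hneg, hneg, pow_add, pow_add]
    linear_combination (Fintype.card F : ℤ) ^ (k - (s + t)) *
      (((Fintype.card F : ℤ) - 1) ^ s * ((Fintype.card F : ℤ) - 1) ^ t * hsq (s + t) +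
      (-1) ^ s * ((Fintype.card F : ℤ) - 1) * ((Fintype.card F : ℤ) - 1) ^ t * hsq t -
      ((Fintype.card F : ℤ) - 1) ^ t * hpsi)))
  zify at hcount
  rw [hset]
  linear_combination hcount + hplane' + hboth' - hnz'
end

section
/- Let q be an odd prime power and let 3 ≤ h ≤ k be integers. Then the cardinality of D_2 = { x ∈ 𝔽_q^k \ {0} : x_i + x_j = 0 for some 1 ≤ i < j ≤ h } equals q^{k−h}·(q^h − Γ(h,q) − h·Γ(h−1,q)) − 1. -/
/-- `S(x,y)`: the number of surjective functions from a set of size `x` onto a set of size `y`. -/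
noncomputable def numSurj (x y : ℕ) : ℕ := Nat.card {f : Fin x → Fin y // Function.Surjective f}

/-- `Γ(h,q) = ∑_{s=1}^{min(h,(q-1)/2)} ((q-1)(q-3)⋯(q-2s+1)/s!)·S(h,s)`
(the inner division is exact). -/
noncomputable def Gamma (q h : ℕ) : ℕ :=
  ∑ s ∈ Finset.Icc 1 (min h ((q - 1) / 2)),
    ((∏ t ∈ Finset.range s, (q - 1 - 2 * t)) / Nat.factorial s) * numSurj h s

lemma numSurj_self (s : ℕ) : numSurj s s = s.factorial := by
  rw [numSurj, Nat.card_congr (β := Equiv.Perm (Fin s)), Nat.card_eq_fintype_card,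
    Fintype.card_perm, Fintype.card_fin]
  refine (Equiv.subtypeEquivRight fun f => ?_).trans (Equiv.ofBijective
    (fun f : {f : Fin s → Fin s // Function.Bijective f} => Equiv.ofBijective f.1 f.2)
    ⟨fun f g h => Subtype.ext (congrArg DFunLike.coe h),
      fun e => ⟨⟨e, e.bijective⟩, Equiv.ext fun _ => rfl⟩⟩)
  exact Finite.surjective_iff_bijective

lemma numSurj_eq_zero_of_lt {n s : ℕ} (h : n < s) : numSurj n s = 0 := by
  rw [numSurj, Nat.card_eq_zero]
  refine Or.inl ⟨fun f => ?_⟩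
  have := Fintype.card_le_of_surjective f.1 f.2
  simp at this
  omega

lemma numSurj_zero_right {n : ℕ} (h : 0 < n) : numSurj n 0 = 0 := by
  rw [numSurj, Nat.card_eq_zero]
  exact Or.inl ⟨fun f => (f.1 ⟨0, h⟩).elim0⟩

open Classical in
lemma card_filter_image_eq {F : Type*} [Fintype F] (n : ℕ) (A : Finset F) :
    (Finset.univ.filter fun f : Fin n → F => Finset.univ.image f = A).card =
      numSurj n A.card := by
  rw [← Fintype.card_subtype, ← Nat.card_eq_fintype_card, numSurj]
  have himage (f : Fin n → F) (hf : Finset.univ.image f = A) (i) : f i ∈ A :=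
    hf ▸ Finset.mem_image_of_mem f (Finset.mem_univ i)
  let e : {f : Fin n → F // Finset.univ.image f = A} ≃
      {f : Fin n → A // Function.Surjective f} :=
    { toFun := fun f => ⟨fun i => ⟨f.1 i, himage f.1 f.2 i⟩, fun a => by
        have ha : a.1 ∈ Finset.univ.image f.1 := by rw [f.2]; exact a.2
        obtain ⟨i, -, hi⟩ := Finset.mem_image.1 ha
        exact ⟨i, Subtype.ext hi⟩⟩
      invFun := fun f => ⟨fun i => f.1 i, by
        ext a
        simp only [Finset.mem_image, Finset.mem_univ, true_and]
        constructor
        · rintro ⟨i, rfl⟩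
          exact (f.1 i).2
        · intro ha
          obtain ⟨i, hi⟩ := f.2 ⟨a, ha⟩
          exact ⟨i, by rw [hi]⟩⟩
      left_inv := fun f => rfl
      right_inv := fun f => rfl }
  rw [Nat.card_congr e]
  refine Nat.card_congr (Equiv.subtypeEquiv (Equiv.arrowCongr (Equiv.refl _) A.equivFin) ?_)
  intro f
  simp [Equiv.arrowCongr]

/-- A set of field elements in which no two elements (possibly equal) sum to zero. -/
def SumNeZero {F : Type*} [Field F] (A : Finset F) : Prop := ∀ a ∈ A, ∀ b ∈ A, a + b ≠ 0

section Counting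

variable {F : Type*} [Field F]

lemma two_ne_zero_of_odd_card [Fintype F] (hodd : Odd (Fintype.card F)) : (2 : F) ≠ 0 := by
  intro h
  have : ringChar F = 2 := CharP.ringChar_of_prime_eq_zero Nat.prime_two (by exact_mod_cast h)
  have := FiniteField.even_card_of_char_two this
  rw [Nat.odd_iff] at hodd
  omega

lemma injective_sumNeZero_cons_iff (h2 : (2 : F) ≠ 0) {s : ℕ} (a : F) (g : Fin s → F) :
    ((∀ i j, (Fin.cons a g : Fin (s + 1) → F) i + (Fin.cons a g : Fin (s + 1) → F) j ≠ 0) ∧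
        Function.Injective (Fin.cons a g : Fin (s + 1) → F)) ↔
      ((∀ i j, g i + g j ≠ 0) ∧ Function.Injective g) ∧
        (a ≠ 0 ∧ ∀ i, a ≠ g i ∧ a + g i ≠ 0) := by
  have haa : a + a ≠ 0 ↔ a ≠ 0 := by rw [← two_mul]; simp [h2]
  rw [Fin.cons_injective_iff]
  simp only [Fin.forall_fin_succ, Fin.cons_zero, Fin.cons_succ, haa, Set.mem_range, not_exists]
  constructor
  · rintro ⟨⟨⟨h0, h1⟩, h3⟩, h4, h5⟩
    exact ⟨⟨fun i j => (h3 i).2 j, h5⟩, h0, fun i => ⟨fun h => h4 i h.symm, h1 i⟩⟩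
  · rintro ⟨⟨h1, h2⟩, h3, h4⟩
    exact ⟨⟨⟨h3, fun i => (h4 i).2⟩, fun i => ⟨by rw [add_comm]; exact (h4 i).2, h1 i⟩⟩,
      fun i h => (h4 i).1 h.symm, h2⟩

lemma sumNeZero_image_iff [DecidableEq F] {n : ℕ} (f : Fin n → F) :
    SumNeZero (Finset.univ.image f) ↔ ∀ i j, f i + f j ≠ 0 := by
  simp [SumNeZero]

variable [Fintype F]

open Classical in
lemma card_admissible_extension {s : ℕ} (g : Fin s → F)
    (hg : (∀ i j, g i + g j ≠ 0) ∧ Function.Injective g) :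
    Fintype.card {a : F // a ≠ 0 ∧ ∀ i, a ≠ g i ∧ a + g i ≠ 0} = Fintype.card F - 1 - 2 * s := by
  set E : Finset F := insert 0 (Finset.univ.image g ∪ Finset.univ.image (fun i => - g i)) with hE
  have hcard : E.card = 1 + 2 * s := by
    have hneg : Function.Injective fun i => - g i := neg_injective.comp hg.2
    rw [hE, Finset.card_insert_of_notMem, Finset.card_union_of_disjoint,
      Finset.card_image_of_injective _ hg.2, Finset.card_image_of_injective _ hneg]
    · simp; ring
    · rw [Finset.disjoint_left]
      intro a ha hb
      obtain ⟨i, -, rfl⟩ := Finset.mem_image.1 ha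
      obtain ⟨j, -, hj⟩ := Finset.mem_image.1 hb
      exact hg.1 i j (by rw [← hj]; ring)
    · intro h0
      have : ∃ i, g i = 0 := by simpa using h0
      obtain ⟨i, hi⟩ := this
      exact hg.1 i i (by simp [hi])
  have : Finset.univ.filter (fun a : F => a ≠ 0 ∧ ∀ i, a ≠ g i ∧ a + g i ≠ 0) = Eᶜ := by
    ext a
    simp only [hE, Finset.mem_filter, Finset.mem_univ, true_and, Finset.mem_compl,
      Finset.mem_insert, Finset.mem_union, Finset.mem_image, not_or, not_exists, ← forall_and]
    refine and_congr_right fun _ => forall_congr' fun i => and_congr (by rw [ne_comm]) ?_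
    rw [Ne, add_eq_zero_iff_eq_neg, eq_comm]
  rw [Fintype.card_subtype, this, Finset.card_compl, hcard]
  omega

open Classical in
lemma card_injective_sumNeZero (h2 : (2 : F) ≠ 0) (s : ℕ) :
    Fintype.card {g : Fin s → F // (∀ i j, g i + g j ≠ 0) ∧ Function.Injective g} =
      ∏ t ∈ Finset.range s, (Fintype.card F - 1 - 2 * t) := by
  induction s with
  | zero =>
    rw [Finset.prod_range_zero, Fintype.card_eq_one_iff]
    exact ⟨⟨Fin.elim0, fun i => i.elim0, fun i => i.elim0⟩,
      fun g => Subtype.ext (Subsingleton.elim _ _)⟩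
  | succ s ih =>
    let e : {g : Fin (s + 1) → F // (∀ i j, g i + g j ≠ 0) ∧ Function.Injective g} ≃
        Σ g : {g : Fin s → F // (∀ i j, g i + g j ≠ 0) ∧ Function.Injective g},
          {a : F // a ≠ 0 ∧ ∀ i, a ≠ g.1 i ∧ a + g.1 i ≠ 0} :=
      { toFun := fun g =>
          have h := (injective_sumNeZero_cons_iff h2 (g.1 0) (Fin.tail g.1)).1
            (by rw [Fin.cons_self_tail]; exact g.2)
          ⟨⟨Fin.tail g.1, h.1⟩, ⟨g.1 0, h.2⟩⟩
        invFun := fun p =>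
          ⟨Fin.cons p.2.1 p.1.1, (injective_sumNeZero_cons_iff h2 _ _).2 ⟨p.1.2, p.2.2⟩⟩
        left_inv := fun g => Subtype.ext (Fin.cons_self_tail g.1)
        right_inv := fun p => rfl }
    rw [Fintype.card_congr e, Fintype.card_sigma,
      Finset.sum_congr rfl fun g _ => card_admissible_extension g.1 g.2, Finset.sum_const,
      Finset.card_univ, ih, Finset.prod_range_succ, smul_eq_mul]

open Classical in
lemma card_sumNeZero_mul_factorial (h2 : (2 : F) ≠ 0) (s : ℕ) :
    (Finset.univ.filter fun A : Finset F => SumNeZero A ∧ A.card = s).card * s.factorial =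
      ∏ t ∈ Finset.range s, (Fintype.card F - 1 - 2 * t) := by
  rw [← card_injective_sumNeZero h2, Fintype.card_subtype,
    Finset.card_eq_sum_card_fiberwise (f := fun g => Finset.univ.image g)
      (t := Finset.univ.filter fun A : Finset F => SumNeZero A ∧ A.card = s)]
  · rw [← smul_eq_mul, ← Finset.sum_const]
    refine Finset.sum_congr rfl fun A hA => ?_
    obtain ⟨-, hA, hs⟩ := Finset.mem_filter.1 hA
    have hfiber := card_filter_image_eq s A
    rw [hs, numSurj_self] at hfiber
    rw [Finset.filter_filter, ← hfiber]
    congr 1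
    ext g
    simp only [Finset.mem_filter, Finset.mem_univ, true_and]
    refine ⟨fun h => ⟨⟨(sumNeZero_image_iff g).1 (h ▸ hA), ?_⟩, h⟩, fun h => h.2⟩
    rw [← Set.injOn_univ, ← Finset.coe_univ, ← Finset.card_image_iff, h, hs, Finset.card_fin]
  · intro g hg
    simp only [Finset.coe_filter, Finset.mem_univ, true_and, Set.mem_ofPred_eq] at hg ⊢
    exact ⟨(sumNeZero_image_iff g).2 hg.1, by simp [Finset.card_image_of_injective _ hg.2]⟩

open Classical in
lemma card_sumNeZero_functions (hodd : Odd (Fintype.card F)) {n : ℕ} (hn : 0 < n) :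
    (Finset.univ.filter fun f : Fin n → F => ∀ i j, f i + f j ≠ 0).card =
      Gamma (Fintype.card F) n := by
  have h2 := two_ne_zero_of_odd_card hodd
  set q := Fintype.card F with hq
  have hcount (s : ℕ) : (∏ t ∈ Finset.range s, (q - 1 - 2 * t)) / s.factorial =
      (Finset.univ.filter fun A : Finset F => SumNeZero A ∧ A.card = s).card := by
    rw [← card_sumNeZero_mul_factorial h2, Nat.mul_div_cancel _ s.factorial_pos]
  have hfiber : (Finset.univ.filter fun f : Fin n → F => ∀ i j, f i + f j ≠ 0).card =
      ∑ A ∈ Finset.univ.filter (fun A : Finset F => SumNeZero A), numSurj n A.card := by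
    rw [Finset.card_eq_sum_card_fiberwise (f := fun g => Finset.univ.image g)
      (t := Finset.univ.filter fun A : Finset F => SumNeZero A)]
    · refine Finset.sum_congr rfl fun A hA => ?_
      rw [Finset.filter_filter, ← card_filter_image_eq]
      congr 1
      ext g
      simp only [Finset.mem_filter, Finset.mem_univ, true_and] at hA ⊢
      exact ⟨fun h => h.2, fun h => ⟨(sumNeZero_image_iff g).1 (h ▸ hA), h⟩⟩
    · intro g hg
      simp only [Finset.coe_filter, Finset.mem_univ, true_and, Set.mem_ofPred_eq] at hg ⊢
      exact (sumNeZero_image_iff g).2 hg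
  rw [hfiber, ← Finset.sum_fiberwise_of_maps_to (g := Finset.card)
    (t := Finset.range (q + 1)) (fun A _ => by
      rw [Finset.mem_range, Nat.lt_succ_iff]; exact Finset.card_le_univ A), Gamma]
  have hterm (s : ℕ) : ∑ A ∈ (Finset.univ.filter fun A : Finset F => SumNeZero A) with A.card = s,
      numSurj n A.card = ((∏ t ∈ Finset.range s, (q - 1 - 2 * t)) / s.factorial) * numSurj n s := by
    rw [hcount, ← smul_eq_mul, ← Finset.sum_const, Finset.filter_filter]
    exact Finset.sum_congr rfl fun A hA => by rw [(Finset.mem_filter.1 hA).2.2]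
  simp only [hterm]
  symm
  apply Finset.sum_subset
  · intro s hs
    simp only [Finset.mem_Icc, Finset.mem_range] at hs ⊢
    omega
  · intro s _ hs
    rcases Nat.eq_zero_or_pos s with rfl | hpos
    · rw [numSurj_zero_right hn, mul_zero]
    rcases lt_or_ge n s with hns | hns
    · rw [numSurj_eq_zero_of_lt hns, mul_zero]
    have hlt : (q - 1) / 2 < s := by
      simp only [Finset.mem_Icc] at hs
      omega
    rw [Finset.prod_eq_zero (Finset.mem_range.2 hlt), Nat.zero_div, zero_mul]
    obtain ⟨m, hm⟩ := hodd
    omega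

open Classical in
lemma card_pairwise_add_ne_zero (hodd : Odd (Fintype.card F)) {n : ℕ} (hn : 0 < n) :
    (Finset.univ.filter fun f : Fin (n + 1) → F => ∀ i j, i ≠ j → f i + f j ≠ 0).card =
      Gamma (Fintype.card F) (n + 1) + (n + 1) * Gamma (Fintype.card F) n := by
  have h2 := two_ne_zero_of_odd_card hodd
  rw [← card_sumNeZero_functions hodd hn, ← card_sumNeZero_functions hodd n.succ_pos]
  have hunion : (Finset.univ.filter fun f : Fin (n + 1) → F => ∀ i j, i ≠ j → f i + f j ≠ 0) =
      (Finset.univ.filter fun f : Fin (n + 1) → F => ∀ i j, f i + f j ≠ 0) ∪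
      Finset.univ.biUnion fun m : Fin (n + 1) =>
        (Finset.univ.filter fun f : Fin n → F => ∀ i j, f i + f j ≠ 0).image
          (fun f => m.insertNth (α := fun _ => F) 0 f) := by
    ext f
    simp only [Finset.mem_filter, Finset.mem_univ, true_and, Finset.mem_union, Finset.mem_biUnion,
      Finset.mem_image]
    constructor
    · intro hf
      by_cases h0 : ∃ m, f m = 0
      · obtain ⟨m, hm⟩ := h0
        refine Or.inr ⟨m, m.removeNth f, fun i j => ?_, ?_⟩
        · by_cases hij : i = j
          · subst hij
            have := hf (m.succAbove i) m (m.succAbove_ne i)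
            rw [hm, add_zero] at this
            rw [← two_mul]
            exact mul_ne_zero h2 this
          · exact hf _ _ fun h => hij (m.succAbove_right_injective h)
        · rw [← hm]
          exact Fin.insertNth_self_removeNth m f
      · push Not at h0
        refine Or.inl fun i j => ?_
        by_cases hij : i = j
        · subst hij
          rw [← two_mul]
          exact mul_ne_zero h2 (h0 i)
        · exact hf i j hij
    · rintro (hf | ⟨m, g, hg, rfl⟩) i j hij
      · exact hf i j
      · have hne (i) : g i ≠ 0 := fun h => hg i i (by simp [h])
        rcases Fin.eq_self_or_eq_succAbove m i with hi | ⟨i, rfl⟩ <;>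
        rcases Fin.eq_self_or_eq_succAbove m j with hj | ⟨j, rfl⟩
        · exact absurd (hi.trans hj.symm) hij
        · simpa [hi] using hne j
        · simpa [hj] using hne i
        · simpa using hg i j
  rw [hunion, Finset.card_union_of_disjoint, Finset.card_biUnion]
  · congr 1
    rw [Finset.sum_congr rfl fun m _ => Finset.card_image_of_injective _
      (Fin.insertNth_right_injective (α := fun _ => F) (p := m) 0)]
    simp
  · intro m _ m' _ hmm
    rw [Function.onFun, Finset.disjoint_left]
    intro f hf hf'
    obtain ⟨g, -, rfl⟩ := Finset.mem_image.1 hf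
    obtain ⟨g', hg', h⟩ := Finset.mem_image.1 hf'
    obtain ⟨i, hi⟩ := Fin.exists_succAbove_eq hmm
    have := congrFun h m
    rw [Fin.insertNth_apply_same, ← hi, Fin.insertNth_apply_succAbove] at this
    exact (Finset.mem_filter.1 hg').2 i i (by simp [this])
  · rw [Finset.disjoint_left]
    intro f hf hf'
    obtain ⟨m, -, hm⟩ := Finset.mem_biUnion.1 hf'
    obtain ⟨g, -, rfl⟩ := Finset.mem_image.1 hm
    exact (Finset.mem_filter.1 hf).2 m m (by simp)

open Classical in
lemma card_exists_add_eq_zero (h m : ℕ) :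
    (Finset.univ.filter fun x : Fin (h + m) → F =>
      ∃ i j : Fin (h + m), (i : ℕ) < j ∧ (j : ℕ) < h ∧ x i + x j = 0).card +
      Fintype.card F ^ m *
        (Finset.univ.filter fun f : Fin h → F => ∀ i j, i ≠ j → f i + f j ≠ 0).card =
      Fintype.card F ^ m * Fintype.card F ^ h := by
  have hsplit : (Finset.univ.filter fun x : Fin (h + m) → F =>
      ∃ i j : Fin (h + m), (i : ℕ) < j ∧ (j : ℕ) < h ∧ x i + x j = 0).card =
      (Finset.univ.filter fun f : Fin h → F => ¬ ∀ i j, i ≠ j → f i + f j ≠ 0).card *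
        Fintype.card F ^ m := by
    rw [← Fintype.card_fin m, ← Fintype.card_fun, ← Finset.card_univ (α := Fin _ → F),
      Fintype.card_fin, ← Finset.card_product]
    symm
    refine Finset.card_equiv (Fin.appendEquiv h m) ?_
    rintro ⟨f, g⟩
    simp only [Finset.mem_product, Finset.mem_filter, Finset.mem_univ, true_and, and_true,
      Fin.appendEquiv, Equiv.coe_fn_mk]
    push Not
    constructor
    · rintro ⟨i, j, hij, h0⟩
      rcases lt_or_gt_of_ne hij with hlt | hlt
      · exact ⟨Fin.castAdd m i, Fin.castAdd m j, hlt, j.2, by simpa using h0⟩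
      · exact ⟨Fin.castAdd m j, Fin.castAdd m i, hlt, i.2, by simpa [add_comm] using h0⟩
    · rintro ⟨i, j, hij, hj, h0⟩
      refine ⟨⟨i, hij.trans hj⟩, ⟨j, hj⟩, fun h => hij.ne (by simpa using h), ?_⟩
      rw [← Fin.append_left f g, ← Fin.append_left f g]
      exact h0
  rw [hsplit, mul_comm, ← mul_add, add_comm, Finset.card_filter_add_card_filter_not]
  simp

end Counting

theorem stmt8 (q : ℕ) (hodd : Odd q) (F : Type*) [Field F] [Fintype F]
    (hF : Fintype.card F = q)
    (k h : ℕ) (hh : 3 ≤ h) (hhk : h ≤ k) :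
    (Nat.card {x : Fin k → F // x ≠ 0 ∧
        ∃ i j : Fin k, (i : ℕ) < (j : ℕ) ∧ (j : ℕ) < h ∧ x i + x j = 0} : ℤ)
      = (q : ℤ) ^ (k - h) * ((q : ℤ) ^ h - (Gamma q h : ℤ) - (h : ℤ) * Gamma q (h - 1)) - 1 := by
  classical
  subst hF
  obtain ⟨m, rfl⟩ := Nat.exists_eq_add_of_le hhk
  obtain ⟨n, rfl⟩ : ∃ n, h = n + 1 := ⟨h - 1, by omega⟩
  have hcount := card_exists_add_eq_zero (F := F) (n + 1) m
  rw [card_pairwise_add_ne_zero hodd (by omega)] at hcount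
  rw [Nat.card_eq_fintype_card, Fintype.card_subtype, Nat.add_sub_cancel_left,
    Nat.add_sub_cancel]
  have herase : (Finset.univ.filter fun x : Fin (n + 1 + m) → F => x ≠ 0 ∧
      ∃ i j : Fin (n + 1 + m), (i : ℕ) < j ∧ (j : ℕ) < n + 1 ∧ x i + x j = 0) =
      (Finset.univ.filter fun x : Fin (n + 1 + m) → F =>
        ∃ i j : Fin (n + 1 + m), (i : ℕ) < j ∧ (j : ℕ) < n + 1 ∧ x i + x j = 0).erase 0 := by
    ext x
    simp
  have hzero : (0 : Fin (n + 1 + m) → F) ∈ Finset.univ.filter fun x : Fin (n + 1 + m) → F =>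
      ∃ i j : Fin (n + 1 + m), (i : ℕ) < j ∧ (j : ℕ) < n + 1 ∧ x i + x j = 0 := by
    refine Finset.mem_filter.2 ⟨Finset.mem_univ _, ⟨0, by omega⟩, ⟨1, by omega⟩, ?_, ?_, ?_⟩
    · simp
    · simp only
      omega
    · simp
  have hpos := Finset.card_erase_add_one hzero
  rw [herase]
  replace hcount := congrArg (Nat.cast (R := ℤ)) hcount
  replace hpos := congrArg (Nat.cast (R := ℤ)) hpos
  simp only [Nat.cast_add, Nat.cast_mul, Nat.cast_pow, Nat.cast_one] at hcount hpos ⊢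
  linear_combination hpos + hcount
end

section
/- Let q > 5 be an odd prime power and let 3 ≤ h ≤ k be integers, and let D_3 = { x ∈ 𝔽_q^k \ {0} : x_i = 0 for some 1 ≤ i ≤ h, or x_i + x_j = 0 for some 1 ≤ i < j ≤ h }. Then: (i) for every 1 ≤ i < j ≤ h, the hyperplanes {x : x_i + x_j = 0} and {x : x_i = 0} each contain exactly q^{k−1} − 1 points of D_3; (ii) for every nonzero α ∈ 𝔽_q^k that is not of the form λ(e_i + e_j) for some λ ∈ 𝔽_q^*, 1 ≤ i < j ≤ h, nor of the form λe_i for some λ ∈ 𝔽_q^*, 1 ≤ i ≤ h (e_i denoting the i-th standard basis vector), one has #{ x ∈ D_3 : ⟨α,x⟩ = 0 } < q^{k−1} − 1. Consequently the minimum weight of the code C_{D_3} is attained exactly by the hyperplanes x_i + x_j = 0 and x_i = 0 with 1 ≤ i < j ≤ h. -/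
/-- A hyperplane of `F ^ k` has `q ^ (k - 1) - 1` nonzero points. -/
theorem ncard_nonzero_hyperplane {F : Type*} [Field F] [Fintype F] {k : ℕ} {α : Fin k → F}
    (hα : α ≠ 0) :
    {x : Fin k → F | x ≠ 0 ∧ ∑ m, α m * x m = 0}.ncard = Fintype.card F ^ (k - 1) - 1 := by
  classical
  let f : Module.Dual F (Fin k → F) := ∑ m, α m • LinearMap.proj m
  have hf : ∀ x, f x = ∑ m, α m * x m := fun x => by simp [f]
  have hf0 : f ≠ 0 := by
    obtain ⟨i, hi⟩ := Function.ne_iff.mp hα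
    intro h
    have := hf (Pi.single i 1)
    simp [h, Pi.single_apply] at this
    exact hi this.symm
  have hrank := Module.Dual.finrank_ker_add_one_of_ne_zero hf0
  rw [Module.finrank_fin_fun] at hrank
  have hker : (f.ker : Set (Fin k → F)).ncard = Fintype.card F ^ (k - 1) := by
    rw [← Nat.card_coe_set_eq, ← Nat.eq_sub_of_add_eq hrank, ← Nat.card_eq_fintype_card]
    exact Module.natCard_eq_pow_finrank (K := F) (V := f.ker)
  have hset : {x : Fin k → F | x ≠ 0 ∧ ∑ m, α m * x m = 0} = (f.ker : Set _) \ {0} := by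
    ext x
    simp [← hf, and_comm]
  rw [hset, Set.ncard_sdiff_singleton_of_mem (by simp), hker]

/-- In a type with more than five elements one can avoid any five given values. -/
theorem exists_ne_five {F : Type*} [Fintype F] (hF : 5 < Fintype.card F) (a b c d e : F) :
    ∃ t, t ≠ a ∧ t ≠ b ∧ t ≠ c ∧ t ≠ d ∧ t ≠ e := by
  classical
  obtain ⟨t, ht⟩ := Finset.exists_mem_notMem_of_card_lt_card
    (s := ({a, b, c, d, e} : Finset F)) (t := Finset.univ)
    (lt_of_le_of_lt Finset.card_le_five (by simpa using hF))
  exact ⟨t, by simpa using ht⟩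

/-- If `a ≠ b` or `c ≠ 0`, the equation `a t + b u + c = 0` with `a, b` nonzero has a solution
such that `t, u, 1` are nonzero and pairwise non-opposite. -/
theorem exists_solution_pair {F : Type*} [Field F] [Fintype F] (hF : 5 < Fintype.card F)
    {a b c : F} (ha : a ≠ 0) (hb : b ≠ 0) (habc : a ≠ b ∨ c ≠ 0) :
    ∃ t u : F, t ≠ 0 ∧ t ≠ -1 ∧ u ≠ 0 ∧ u ≠ -1 ∧ t + u ≠ 0 ∧ a * t + b * u + c = 0 := by
  obtain ⟨t, h0, h1, h2, h3, h4⟩ := exists_ne_five hF 0 (-1) (-c / a) ((b - c) / a) (c / (b - a))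
  have hu : a * t + b * (-(c + a * t) / b) + c = 0 := by field_simp; ring
  generalize -(c + a * t) / b = u at hu
  refine ⟨t, u, h0, h1, ?_, ?_, ?_, hu⟩
  · rintro rfl
    exact h2 (by rw [eq_div_iff ha]; linear_combination hu)
  · rintro rfl
    exact h3 (by rw [eq_div_iff ha]; linear_combination hu)
  · intro htu
    have hc : t * (b - a) = c := by linear_combination b * htu - hu
    by_cases hab : b - a = 0
    · rcases habc with h | h
      · exact h (sub_eq_zero.mp hab).symm
      · exact h (by rw [← hc, hab, mul_zero])
    · exact h4 (by rw [eq_div_iff hab, hc])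

/-- The equation `t + 2 u = 1` has a solution with `t, u, 1` nonzero and pairwise non-opposite. -/
theorem exists_solution_triple {F : Type*} [Field F] [Fintype F] (hF : 5 < Fintype.card F)
    (two_ne : (2 : F) ≠ 0) :
    ∃ t u : F, t ≠ 0 ∧ t ≠ -1 ∧ u ≠ 0 ∧ u ≠ -1 ∧ t + u ≠ 0 ∧ t + 2 * u = 1 := by
  obtain ⟨u, h0, h1, h2, h3, -⟩ := exists_ne_five hF 0 (-1) (1 / 2 : F) 1 1
  refine ⟨1 - 2 * u, u, fun h => ?_, fun h => ?_, h0, h1, fun h => ?_, by ring⟩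
  · exact h2 (by rw [eq_div_iff two_ne]; linear_combination -h)
  · exact h3 (mul_left_cancel₀ two_ne (by linear_combination -h))
  · exact h3 (by linear_combination -h)

/-- If `t, u, 1` are nonzero and pairwise non-opposite, so are the entries of a vector with
values in `{t, u, 1}`. -/
theorem add_ne_zero_of_mem_triple {F ι : Type*} [Field F] (two_ne : (2 : F) ≠ 0) {t u : F}
    (ht : t ≠ 0) (ht1 : t ≠ -1) (hu : u ≠ 0) (hu1 : u ≠ -1) (htu : t + u ≠ 0) {x : ι → F}
    (hx : ∀ n, x n = t ∨ x n = u ∨ x n = 1) (i j : ι) : x i + x j ≠ 0 := by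
  rcases hx i with hi | hi | hi <;> rcases hx j with hj | hj | hj <;> rw [hi, hj] <;> grind

/-- A hyperplane other than `x i = 0` and `x i + x j = 0` with `i ≠ j` in `S` contains a vector
whose entries on `S` are nonzero and pairwise non-opposite. -/
theorem exists_mem_hyperplane_avoiding {F ι : Type*} [Field F] [Fintype F] [Fintype ι]
    [DecidableEq ι] (hF : 5 < Fintype.card F) (two_ne : (2 : F) ≠ 0) (S : Set ι) {α : ι → F}
    (hα : α ≠ 0)
    (hpair : ∀ (c : F) (i j : ι), c ≠ 0 → i ∈ S → j ∈ S → i ≠ j →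
      α ≠ c • (Pi.single i (1 : F) + Pi.single j (1 : F)))
    (hsingle : ∀ (c : F) (i : ι), c ≠ 0 → i ∈ S → α ≠ c • (Pi.single i (1 : F) : ι → F)) :
    ∃ x : ι → F, (∀ i ∈ S, x i ≠ 0) ∧ (∀ i ∈ S, ∀ j ∈ S, i ≠ j → x i + x j ≠ 0) ∧
      ∑ m, α m * x m = 0 := by
  have two_ne' : (1 : F) + 1 ≠ 0 := by rwa [one_add_one_eq_two]
  obtain ⟨i, hi⟩ := Function.ne_iff.mp hα
  rw [Pi.zero_apply] at hi
  by_cases hS : ∃ m, m ∉ S ∧ α m ≠ 0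
  · obtain ⟨m, hmS, hm⟩ := hS
    have hne : ∀ i ∈ S, i ≠ m := fun i hi h => hmS (h ▸ hi)
    refine ⟨fun n => 1 + if n = m then -(∑ n, α n) / α m else 0, ?_, ?_, ?_⟩
    · intro i hi
      simp [hne i hi]
    · intro i hi j hj _
      simpa [hne i hi, hne j hj] using two_ne'
    · simp only [mul_add, Finset.sum_add_distrib, mul_ite, mul_zero, mul_one,
        Finset.sum_ite_eq', Finset.mem_univ, if_true]
      field_simp
      ring
  have hS' : ∀ m, α m ≠ 0 → m ∈ S := fun m hm => by
    by_contra h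
    exact hS ⟨m, h, hm⟩
  by_cases hex : ∃ i j, i ≠ j ∧ α i ≠ 0 ∧ α j ≠ 0 ∧ (α i ≠ α j ∨ ∑ m, α m - α i - α j ≠ 0)
  · obtain ⟨i, j, hij, hi, hj, hc⟩ := hex
    obtain ⟨t, u, ht, ht1, hu, hu1, htu, h⟩ := exists_solution_pair hF hi hj hc
    let x : ι → F := fun n => 1 + (if n = i then t - 1 else 0) + if n = j then u - 1 else 0
    have hx : ∀ n, x n = t ∨ x n = u ∨ x n = 1 := fun n => by
      by_cases hni : n = i
      · subst hni; simp [x, hij]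
      by_cases hnj : n = j
      · subst hnj; simp [x, hni]
      simp [x, hni, hnj]
    have hadd := add_ne_zero_of_mem_triple two_ne ht ht1 hu hu1 htu hx
    have hsum : ∑ m, α m * x m = 0 := by
      simp only [x, mul_add, Finset.sum_add_distrib, mul_ite, mul_zero, mul_one,
        Finset.sum_ite_eq', Finset.mem_univ, if_true]
      linear_combination h
    exact ⟨x, fun n _ h0 => hadd n n (by rw [h0, add_zero]), fun m _ n _ _ => hadd m n, hsum⟩
  push Not at hex
  have hj : ∃ j, j ≠ i ∧ α j ≠ 0 := by
    by_contra! h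
    refine hsingle (α i) i hi (hS' i hi) (funext fun m => ?_)
    by_cases hm : m = i
    · subst hm; simp
    · simp [hm, h m hm]
  obtain ⟨j, hji, hj⟩ := hj
  obtain ⟨hij, hc⟩ := hex i j hji.symm hi hj
  have hl : ∃ l, l ≠ i ∧ l ≠ j ∧ α l ≠ 0 := by
    by_contra! h
    refine hpair (α i) i j hi (hS' i hi) (hS' j hj) hji.symm (funext fun m => ?_)
    by_cases hm : m = i
    · subst hm; simp [hji.symm]
    by_cases hm' : m = j
    · subst hm'; simp [hm, hij]
    · simp [hm, hm', h m hm hm']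
  obtain ⟨l, hli, hlj, hl⟩ := hl
  have hil := (hex i l hli.symm hi hl).1
  obtain ⟨t, u, ht, ht1, hu, hu1, htu, h⟩ := exists_solution_triple hF two_ne
  let x : ι → F := fun n => 1 + (if n = i then t - 1 else 0) + (if n = j then u - 1 else 0) +
    if n = l then u - 1 else 0
  have hx : ∀ n, x n = t ∨ x n = u ∨ x n = 1 := fun n => by
    by_cases hni : n = i
    · subst hni; simp [x, hji.symm, hli.symm]
    by_cases hnj : n = j
    · subst hnj; simp [x, hni, hlj.symm]
    by_cases hnl : n = l
    · subst hnl; simp [x, hni, hnj]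
    simp [x, hni, hnj, hnl]
  have hadd := add_ne_zero_of_mem_triple two_ne ht ht1 hu hu1 htu hx
  have hsum : ∑ m, α m * x m = 0 := by
    simp only [x, mul_add, Finset.sum_add_distrib, mul_ite, mul_zero, mul_one,
      Finset.sum_ite_eq', Finset.mem_univ, if_true]
    rw [← hij] at hc ⊢
    rw [← hil]
    linear_combination hc + α i * h
  exact ⟨x, fun n _ h0 => hadd n n (by rw [h0, add_zero]), fun m _ n _ _ => hadd m n, hsum⟩

theorem stmt13 (q : ℕ) (hq : 5 < q) (hodd : Odd q) (F : Type*) [Field F] [Fintype F]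
    (hF : Fintype.card F = q)
    (k h : ℕ) (hh : 3 ≤ h) (hhk : h ≤ k)
    (D3 : Set (Fin k → F))
    (hD3 : D3 = {x | x ≠ 0 ∧
      ((∃ i : Fin k, (i : ℕ) < h ∧ x i = 0) ∨
        ∃ i j : Fin k, (i : ℕ) < (j : ℕ) ∧ (j : ℕ) < h ∧ x i + x j = 0)}) :
    -- (i)
    (∀ i j : Fin k, (i : ℕ) < (j : ℕ) → (j : ℕ) < h →
      Nat.card {x : Fin k → F // x ∈ D3 ∧ x i + x j = 0} = q ^ (k - 1) - 1)
    ∧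
    (∀ i : Fin k, (i : ℕ) < h →
      Nat.card {x : Fin k → F // x ∈ D3 ∧ x i = 0} = q ^ (k - 1) - 1)
    ∧
    -- (ii)
    (∀ α : Fin k → F, α ≠ 0 →
      (¬ ∃ (lam : F) (i j : Fin k), lam ≠ 0 ∧ (i : ℕ) < (j : ℕ) ∧ (j : ℕ) < h ∧
          α = lam • (Pi.single i (1 : F) + Pi.single j (1 : F))) →
      (¬ ∃ (lam : F) (i : Fin k), lam ≠ 0 ∧ (i : ℕ) < h ∧ α = lam • (Pi.single i (1 : F) : Fin k → F)) →
      Nat.card {x : Fin k → F // x ∈ D3 ∧ ∑ m, α m * x m = 0} < q ^ (k - 1) - 1) := by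
  classical
  have hF5 : 5 < Fintype.card F := hF ▸ hq
  have two_ne : (2 : F) ≠ 0 := by
    refine Ring.two_ne_zero fun h2 => ?_
    have := FiniteField.even_card_of_char_two h2
    rw [hF] at this
    exact Nat.not_even_iff_odd.mpr hodd (Nat.even_iff.mpr this)
  subst hD3
  refine ⟨fun i j hij hj => ?_, fun i hi => ?_, fun α hα hpair hsingle => ?_⟩
  · have hij' : i ≠ j := fun h => hij.ne (congrArg _ h)
    have hα : (Pi.single i 1 + Pi.single j 1 : Fin k → F) ≠ 0 := fun h => by
      simpa [hij'] using congrFun h i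
    rw [← hF, ← ncard_nonzero_hyperplane hα, ← Nat.card_coe_set_eq]
    refine Nat.card_congr (Equiv.subtypeEquivRight fun x => ?_)
    simp only [Pi.add_apply, add_mul, Finset.sum_add_distrib, Pi.single_apply, ite_mul, one_mul,
      zero_mul, Finset.sum_ite_eq', Finset.mem_univ, if_true, Set.mem_ofPred_eq]
    exact ⟨fun h => ⟨h.1.1, h.2⟩, fun h => ⟨⟨h.1, .inr ⟨i, j, hij, hj, h.2⟩⟩, h.2⟩⟩
  · have hα : (Pi.single i 1 : Fin k → F) ≠ 0 := fun h => by
      simpa using congrFun h i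
    rw [← hF, ← ncard_nonzero_hyperplane hα, ← Nat.card_coe_set_eq]
    refine Nat.card_congr (Equiv.subtypeEquivRight fun x => ?_)
    simp only [Pi.single_apply, ite_mul, one_mul,
      zero_mul, Finset.sum_ite_eq', Finset.mem_univ, if_true, Set.mem_ofPred_eq]
    exact ⟨fun h => ⟨h.1.1, h.2⟩, fun h => ⟨⟨h.1, .inl ⟨i, hi, h.2⟩⟩, h.2⟩⟩
  · obtain ⟨x, hx0, hxx, hx⟩ := exists_mem_hyperplane_avoiding hF5 two_ne
      {i : Fin k | (i : ℕ) < h} hα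
      (fun c i j hc hi hj hij h => by
        rcases lt_or_gt_of_ne (Fin.val_ne_of_ne hij) with hlt | hlt
        · exact hpair ⟨c, i, j, hc, hlt, hj, h⟩
        · exact hpair ⟨c, j, i, hc, hlt, hi, by rw [h, add_comm]⟩)
      (fun c i hc hi h => hsingle ⟨c, i, hc, hi, h⟩)
    rw [← hF, ← ncard_nonzero_hyperplane hα]
    refine (Nat.card_coe_set_eq {x : Fin k → F | x ∈ _ ∧ ∑ m, α m * x m = 0}).trans_lt
      (Set.ncard_lt_ncard ?_ (Set.toFinite _))
    refine ⟨fun y hy => ⟨hy.1.1, hy.2⟩, fun hsub => ?_⟩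
    have hx_ne : x ≠ 0 := by
      rintro rfl
      exact hx0 ⟨0, by omega⟩ (show 0 < h by omega) rfl
    obtain ⟨⟨-, ⟨i, hi, h0⟩ | ⟨i, j, hij, hj, h0⟩⟩, -⟩ := hsub ⟨hx_ne, hx⟩
    · exact hx0 i hi h0
    · exact hxx i (hij.trans hj) j hj (fun h => hij.ne (congrArg _ h)) h0
end

section
/- Let q > 3 be a prime power and let 3 ≤ h < k be integers. Let D_4 = { x ∈ 𝔽_q^k \ {0} : x_1·⋯·x_h = 0 }, n = #D_4 = q^{k−h}(q^h − (q−1)^h) − 1, and for a linear form f on 𝔽_q^k and b ∈ 𝔽_q set W(f,b) := #{ x ∈ D_4 : f(x) ≠ 0 } + #{ x ∈ D_4 : f(x) + b ≠ 0 }. Set w := n − q^{k−1} + q^{k−h−1}(q−1)^h + 1 and, for s ∈ {1,…,h}, w_s := n − q^{k−1} + q^{k−h}(q−1)^{h−s}ψ_s + 1. Then the values 0, n, 2w, n + w(q−2)/(q−1), and 2w_s, n + w_s(q−2)/(q−1) for s = 1, …, h are pairwise distinct, and the number of pairs (f,b) with W(f,b) = i is: 1 for i = 0; q − 1 for i = n;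 C(h,s)(q−1)^s for i = 2w_s (each s = 1,…,h); C(h,s)(q−1)^{s+1} for i = n + w_s(q−2)/(q−1) (each s = 1,…,h); q^k − q^h for i = 2w; and (q^k − q^h)(q−1) for i = n + w(q−2)/(q−1); and W(f,b) takes no other values. -/
open Finset

/-- The number of nonzero coordinates in `H` of a vector supported in `H`, and `#H + 1` for every
other vector. -/
noncomputable def supportType {ι F : Type*} [Field F] (H : Finset ι) (a : ι → F) : ℕ :=
  open Classical in if ∀ i ∉ H, a i = 0 then #{i ∈ H | a i ≠ 0} else #H + 1

/-- The value `(-1)^j m^(h-j)` for `j ≠ h + 1`, and `0` for `j = h + 1`. -/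
def charDefect (m : ℤ) (h j : ℕ) : ℤ := if j = h + 1 then 0 else (-1) ^ j * m ^ (h - j)

theorem supportType_of_supported {ι F : Type*} [Field F] [DecidableEq F] {H : Finset ι}
    {a : ι → F} (h0 : ∀ i ∉ H, a i = 0) : supportType H a = #{i ∈ H | a i ≠ 0} := by
  rw [supportType, if_pos h0]
  congr!

theorem supportType_of_not_supported {ι F : Type*} [Field F] {H : Finset ι}
    {a : ι → F} (h0 : ¬ ∀ i ∉ H, a i = 0) : supportType H a = #H + 1 := by
  rw [supportType, if_neg h0]

theorem supportType_smul {ι F : Type*} [Field F] (H : Finset ι) (a : ι → F) {t : F} (ht : t ≠ 0) :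
    supportType H (t • a) = supportType H a := by
  have hmul : ∀ i, (t • a) i = 0 ↔ a i = 0 := fun i => by simp [ht]
  classical
  by_cases h0 : ∀ i ∉ H, a i = 0
  · rw [supportType_of_supported h0, supportType_of_supported fun i hi => (hmul i).mpr (h0 i hi)]
    simp only [ne_eq, hmul]
  · rw [supportType_of_not_supported h0, supportType_of_not_supported]
    simpa only [hmul] using h0

theorem supportType_le {ι F : Type*} [Field F] (H : Finset ι) (a : ι → F) :
    supportType H a ≤ #H + 1 := by
  classical
  by_cases h0 : ∀ i ∉ H, a i = 0
  · rw [supportType_of_supported h0]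
    exact (card_filter_le _ _).trans (Nat.le_succ _)
  · exact (supportType_of_not_supported h0).le

theorem supportType_eq_zero_iff {ι F : Type*} [Field F] {H : Finset ι} {a : ι → F} :
    supportType H a = 0 ↔ a = 0 := by
  classical
  by_cases h0 : ∀ i ∉ H, a i = 0
  · rw [supportType_of_supported h0, card_eq_zero, filter_eq_empty_iff]
    refine ⟨fun h => funext fun i => ?_, fun h => by simp [h]⟩
    by_cases hi : i ∈ H
    · simpa using h hi
    · exact h0 i hi
  · rw [supportType_of_not_supported h0]
    exact iff_of_false (Nat.succ_ne_zero _) fun h => h0 (by simp [h])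

theorem addChar_map_sum {ι F : Type*} [Fintype ι] [Field F] (ψ : AddChar F ℂ) (y : ι → F) :
    ψ (∑ i, y i) = ∏ i, ψ (y i) := by
  exact map_prod ψ.toMonoidHom (fun i => Multiplicative.ofAdd (y i)) univ

theorem sum_erase_zero_mulShift {F : Type*} [Field F] [Fintype F] [DecidableEq F]
    {ψ : AddChar F ℂ} (hψ : ψ.IsPrimitive) (a : F) :
    ∑ x ∈ univ.erase 0, ψ (x * a) = if a = 0 then (Fintype.card F : ℂ) - 1 else -1 := by
  have h1 := AddChar.sum_mulShift a hψ
  rw [← Finset.add_sum_erase _ _ (mem_univ (0 : F))] at h1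
  split_ifs at h1 ⊢ with h0
  · simp only [zero_mul, AddChar.map_zero_eq_one] at h1
    linear_combination h1
  · simp only [zero_mul, AddChar.map_zero_eq_one, Nat.cast_zero] at h1
    linear_combination h1

section CharacterSums

variable {ι F : Type*} [Fintype ι] [DecidableEq ι] [Field F] [Fintype F] [DecidableEq F]

theorem charSum_nonzero_coords {ψ : AddChar F ℂ} (hψ : ψ.IsPrimitive) (H : Finset ι) (a : ι → F) :
    ∑ x ∈ univ.filter (fun x : ι → F => ∀ i ∈ H, x i ≠ 0), ψ (∑ i, x i * a i)
      = (Fintype.card F : ℂ) ^ (Fintype.card ι - #H)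
        * (charDefect ((Fintype.card F : ℤ) - 1) #H (supportType H a) : ℂ) := by
  have hset : univ.filter (fun x : ι → F => ∀ i ∈ H, x i ≠ 0)
      = Fintype.piFinset (fun i => if i ∈ H then univ.erase (0 : F) else univ) := by
    ext x
    simp only [mem_filter, mem_univ, true_and, Fintype.mem_piFinset]
    refine forall_congr' fun i => ?_
    split_ifs with hi <;> simp [hi]
  have hprod : ∑ x ∈ univ.filter (fun x : ι → F => ∀ i ∈ H, x i ≠ 0), ψ (∑ i, x i * a i)
      = ∏ i, (if i ∈ H then (if a i = 0 then (Fintype.card F : ℂ) - 1 else -1)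
          else (if a i = 0 then (Fintype.card F : ℂ) else 0)) := by
    simp_rw [hset, addChar_map_sum]
    rw [← Finset.prod_univ_sum (fun i => if i ∈ H then univ.erase (0 : F) else univ)
      (fun i y => ψ (y * a i))]
    refine Finset.prod_congr rfl fun i _ => ?_
    by_cases hi : i ∈ H
    · simp only [hi, if_true]
      exact sum_erase_zero_mulShift hψ _
    · simp only [hi, if_false]
      rw [AddChar.sum_mulShift _ hψ]
      split_ifs <;> simp
  rw [hprod]
  by_cases hout : ∀ i ∉ H, a i = 0
  · have hle : #{i ∈ H | a i ≠ 0} ≤ #H := card_filter_le _ _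
    rw [Finset.prod_ite, Finset.filter_mem_eq_inter, univ_inter]
    have h2 : ∏ i ∈ univ with i ∉ H, (if a i = 0 then (Fintype.card F : ℂ) else 0)
        = (Fintype.card F : ℂ) ^ (Fintype.card ι - #H) := by
      rw [Finset.prod_congr rfl (g := fun _ => (Fintype.card F : ℂ)), prod_const]
      · congr 1
        rw [← Finset.card_compl]
        congr 1
        ext i
        simp
      · intro i hi
        simp only [mem_filter, mem_univ, true_and] at hi
        rw [if_pos (hout i hi)]
    rw [h2, Finset.prod_ite, prod_const, prod_const, supportType_of_supported hout, charDefect,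
      if_neg (by omega)]
    have hcard : #{i ∈ H | a i = 0} = #H - #{i ∈ H | a i ≠ 0} := by
      have := Finset.card_filter_add_card_filter_not (s := H) (fun i => a i = 0)
      simp only [ne_eq]
      omega
    rw [hcard]
    push_cast
    simp only [ne_eq]
    ring
  · rw [supportType_of_not_supported hout]
    push Not at hout
    obtain ⟨i, hi, hai⟩ := hout
    simp only [charDefect, if_true, Int.cast_zero, mul_zero]
    exact Finset.prod_eq_zero (mem_univ i) (by simp [hi, hai])

theorem charSum_univ {ψ : AddChar F ℂ} (hψ : ψ.IsPrimitive) {a : ι → F} (ha : a ≠ 0) :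
    ∑ x : ι → F, ψ (∑ i, x i * a i) = 0 := by
  obtain ⟨i, hi⟩ := Function.ne_iff.mp ha
  have h := Finset.prod_univ_sum (fun _ : ι => (univ : Finset F)) (fun i y => ψ (y * a i))
  rw [Fintype.piFinset_univ] at h
  simp_rw [addChar_map_sum]
  rw [← h]
  refine Finset.prod_eq_zero (mem_univ i) ?_
  rw [AddChar.sum_mulShift _ hψ, if_neg (by simpa using hi), Nat.cast_zero]

theorem card_hyperplane_section (H : Finset ι) {a : ι → F} (ha : a ≠ 0) {c : F} (hc : c ≠ 0) :
    (Fintype.card F : ℤ) * #{x : ι → F | (∃ i ∈ H, x i = 0) ∧ ∑ i, x i * a i = c}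
      = #{x : ι → F | ∃ i ∈ H, x i = 0} + (Fintype.card F : ℤ) ^ (Fintype.card ι - #H)
        * charDefect ((Fintype.card F : ℤ) - 1) #H (supportType H a) := by
  set ψ := AddChar.FiniteField.primitiveChar_to_Complex F
  have hψ : ψ.IsPrimitive := AddChar.FiniteField.primitiveChar_to_Complex_isPrimitive F
  set Z : Finset (ι → F) := {x | ∃ i ∈ H, x i = 0} with hZ
  set K : ℂ := (Fintype.card F : ℂ) ^ (Fintype.card ι - #H)
    * (charDefect ((Fintype.card F : ℤ) - 1) #H (supportType H a) : ℂ) with hK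
  have hS : ∀ t : F, t ≠ 0 → ∑ x ∈ Z, ψ (t * ∑ i, x i * a i) = -K := by
    intro t ht
    have h1 := charSum_univ hψ (smul_ne_zero ht ha)
    have h2 := charSum_nonzero_coords hψ H (t • a)
    rw [supportType_smul H a ht, ← hK] at h2
    rw [← Finset.sum_filter_add_sum_filter_not univ (fun x : ι → F => ∃ i ∈ H, x i = 0)] at h1
    have h3 : ∑ x ∈ univ.filter (fun x : ι → F => ¬ ∃ i ∈ H, x i = 0),
        ψ (∑ i, x i * (t • a) i) = K := by
      rw [← h2]
      congr 1
      ext x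
      simp
    rw [h3] at h1
    rw [← eq_neg_iff_add_eq_zero] at h1
    rw [← h1]
    refine Finset.sum_congr rfl fun x _ => ?_
    rw [Finset.mul_sum]
    congr 1
    refine Finset.sum_congr rfl fun i _ => ?_
    simp only [Pi.smul_apply, smul_eq_mul]
    ring
  have hdouble : ∑ x ∈ Z, ∑ t : F, ψ (t * (∑ i, x i * a i - c))
      = (Fintype.card F : ℂ) * #{x : ι → F | (∃ i ∈ H, x i = 0) ∧ ∑ i, x i * a i = c} := by
    simp_rw [AddChar.sum_mulShift _ hψ, sub_eq_zero]
    rw [← Finset.filter_filter, ← hZ]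
    push_cast
    rw [← Finset.sum_filter, sum_const, nsmul_eq_mul]
    ring
  have hsum : ∑ x ∈ Z, ∑ t : F, ψ (t * (∑ i, x i * a i - c)) = #Z + K := by
    rw [Finset.sum_comm, ← Finset.add_sum_erase _ _ (mem_univ (0 : F))]
    have h1 : ∀ t ∈ univ.erase (0 : F), ∑ x ∈ Z, ψ (t * (∑ i, x i * a i - c))
        = ψ (t * -c) * -K := by
      intro t ht
      rw [← hS t (ne_of_mem_erase ht), Finset.mul_sum]
      refine Finset.sum_congr rfl fun x _ => ?_
      rw [← AddChar.map_add_eq_mul]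
      congr 1
      ring
    rw [Finset.sum_congr rfl h1, ← Finset.sum_mul, sum_erase_zero_mulShift hψ,
      if_neg (neg_ne_zero.mpr hc)]
    simp
  have := hdouble.symm.trans hsum
  rw [hK] at this
  exact_mod_cast this

/-- The number of vectors of a given support type. -/
theorem card_supportType_eq (H : Finset ι) {j : ℕ} (hj : j ≤ #H) :
    #{a : ι → F | supportType H a = j} = (#H).choose j * (Fintype.card F - 1) ^ j := by
  have hset : univ.filter (fun a : ι → F => supportType H a = j)
      = (powersetCard j H).biUnion fun S =>
        Fintype.piFinset fun i => if i ∈ S then univ.erase (0 : F) else {0} := by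
    ext a
    simp only [mem_filter, mem_univ, true_and, mem_biUnion, mem_powersetCard,
      Fintype.mem_piFinset]
    constructor
    · intro h
      by_cases h0 : ∀ i ∉ H, a i = 0
      · rw [supportType_of_supported h0] at h
        refine ⟨{i ∈ H | a i ≠ 0}, ⟨filter_subset _ _, h⟩, fun i => ?_⟩
        by_cases hi : i ∈ H <;> by_cases hai : a i = 0 <;> simp [hi, hai]
        exact hai (h0 i hi)
      · rw [supportType_of_not_supported h0] at h
        omega
    · rintro ⟨S, ⟨hSH, hS⟩, h⟩
      have hmem : ∀ i, a i ≠ 0 ↔ i ∈ S := by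
        intro i
        have := h i
        split_ifs at this with hi <;> simp_all
      have h0 : ∀ i ∉ H, a i = 0 := fun i hi => by
        by_contra hne
        exact hi (hSH ((hmem i).mp hne))
      rw [supportType_of_supported h0, ← hS]
      congr 1
      ext i
      simp only [mem_filter, hmem]
      exact ⟨fun h => h.2, fun h => ⟨hSH h, h⟩⟩
  rw [hset, Finset.card_biUnion, Finset.sum_congr rfl (g := fun _ => (Fintype.card F - 1) ^ j),
    sum_const, card_powersetCard, smul_eq_mul]
  · intro S hS
    rw [mem_powersetCard] at hS
    rw [Fintype.card_piFinset]
    simp_rw [apply_ite Finset.card, card_erase_of_mem (mem_univ (0 : F)), card_singleton, card_univ]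
    rw [Finset.prod_ite_mem, univ_inter, prod_const, hS.2]
  · intro S _ T _ hST
    rw [Function.onFun, Finset.disjoint_left]
    intro a haS haT
    refine hST ?_
    rw [Fintype.mem_piFinset] at haS haT
    ext i
    have h1 := haS i
    have h2 := haT i
    by_cases hS : i ∈ S <;> by_cases hT : i ∈ T <;> simp_all

theorem card_supportType_eq_succ (H : Finset ι) :
    #{a : ι → F | supportType H a = #H + 1}
      = Fintype.card F ^ Fintype.card ι - Fintype.card F ^ #H := by
  have hset : univ.filter (fun a : ι → F => supportType H a = #H + 1)
      = (Fintype.piFinset fun i => if i ∈ H then (univ : Finset F) else {0})ᶜ := by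
    ext a
    simp only [mem_filter, mem_univ, true_and, mem_compl, Fintype.mem_piFinset]
    have hiff : (∀ i, a i ∈ if i ∈ H then (univ : Finset F) else {0}) ↔ ∀ i ∉ H, a i = 0 := by
      refine forall_congr' fun i => ?_
      split_ifs with hi <;> simp [hi]
    rw [hiff]
    by_cases h0 : ∀ i ∉ H, a i = 0
    · have hle : #{i ∈ H | a i ≠ 0} ≤ #H := card_filter_le _ _
      rw [supportType_of_supported h0]
      exact iff_of_false (by omega) (not_not.mpr h0)
    · exact iff_of_true (supportType_of_not_supported h0) h0
  rw [hset, card_compl, Fintype.card_fun, Fintype.card_piFinset]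
  simp_rw [apply_ite Finset.card, card_singleton, card_univ]
  rw [Finset.prod_ite_mem, univ_inter, prod_const]

end CharacterSums

/-- The weight of a pair `(f, b)` with `f` of support type `v.1`, where `v.2` tells whether `b = 0`. -/
def weightValue (m P B : ℤ) (h : ℕ) (v : ℕ × Bool) : ℤ :=
  match v.2 with
  | true => if v.1 = 0 then 0 else 2 * (m * (P * (B + charDefect m h v.1)))
  | false => P * (m + 1) * B - 1
      + if v.1 = 0 then 0 else (m - 1) * (P * (B + charDefect m h v.1))

theorem add_one_pow_sub_pow_lower {m : ℤ} (hm : 0 ≤ m) (g : ℕ) :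
    3 * m ^ (g + 2) + 3 * m ^ (g + 1) ≤ (m + 1) ^ (g + 3) - m ^ (g + 3) := by
  induction g with
  | zero => ring_nf; linarith
  | succ g ih =>
    have h1 : 0 ≤ m ^ (g + 1) := pow_nonneg hm _
    have h2 : 0 ≤ m ^ (g + 2) := pow_nonneg hm _
    have h3 : 0 ≤ m ^ (g + 3) := pow_nonneg hm _
    have h4 := mul_le_mul_of_nonneg_left ih (by linarith : 0 ≤ m + 1)
    have e1 : m ^ (g + 2) = m * m ^ (g + 1) := by ring
    have e2 : m ^ (g + 3) = m * m ^ (g + 2) := by ring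
    have e3 : m ^ (g + 1 + 3) = m * m ^ (g + 3) := by ring
    have e4 : (m + 1) ^ (g + 1 + 3) = (m + 1) * (m + 1) ^ (g + 3) := by ring
    have e5 : m ^ (g + 1 + 2) = m ^ (g + 3) := by ring
    have e6 : m ^ (g + 1 + 1) = m ^ (g + 2) := by ring
    rw [e3, e4, e5, e6]
    nlinarith

theorem abs_charDefect_le {m : ℤ} (hm : 1 ≤ m) {h j : ℕ} (hj : 1 ≤ j) :
    |charDefect m h j| ≤ m ^ (h - 1) := by
  unfold charDefect
  split_ifs
  · simp only [abs_zero]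
    positivity
  · rw [abs_mul, abs_pow, abs_neg, abs_one, one_pow, one_mul, abs_of_nonneg (by positivity)]
    exact pow_le_pow_right₀ hm (by omega)

theorem charDefect_injOn {m : ℤ} (hm : 2 ≤ m) {h i j : ℕ} (hi : i ≤ h + 1) (hj : j ≤ h + 1)
    (hij : charDefect m h i = charDefect m h j) : i = j := by
  have habs : ∀ l, |((-1) ^ l * m ^ (h - l) : ℤ)| = m ^ (h - l) := fun l => by
    rw [abs_mul, abs_pow, abs_neg, abs_one, one_pow, one_mul, abs_of_nonneg (by positivity)]
  have hne : ∀ l, ((-1) ^ l * m ^ (h - l) : ℤ) ≠ 0 := fun l => by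
    rw [← abs_pos, habs]
    positivity
  unfold charDefect at hij
  split_ifs at hij with h1 h2 h2
  · omega
  · exact absurd hij.symm (hne _)
  · exact absurd hij (hne _)
  · have := congrArg abs hij
    rw [habs, habs] at this
    have := pow_right_injective₀ (by linarith : 0 < m) (by linarith : m ≠ 1) this
    omega

theorem two_mul_charDefect_ne {m : ℤ} (hm : 3 ≤ m) {h i j : ℕ} :
    2 * m * charDefect m h i ≠ (m - 1) * charDefect m h j - 1 := by
  intro heq
  have hdvd : m ∣ charDefect m h j + 1 :=
    ⟨charDefect m h j - 2 * charDefect m h i, by linear_combination heq⟩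
  have hn1 : ¬ m ∣ 1 := fun hd => by
    have := Int.le_of_dvd one_pos hd
    linarith
  by_cases hj : j = h + 1
  · rw [charDefect, if_pos hj, zero_add] at hdvd
    exact hn1 hdvd
  by_cases hlt : h - j = 0
  · have hval : charDefect m h j = (-1) ^ j := by rw [charDefect, if_neg hj, hlt]; ring
    rcases neg_one_pow_eq_or ℤ j with h1 | h1
    · rw [hval, h1] at hdvd
      have := Int.le_of_dvd (by norm_num) hdvd
      linarith
    · rw [hval, h1] at heq
      have h2 : m * (2 * charDefect m h i + 1) = 0 := by linear_combination heq
      rcases mul_eq_zero.mp h2 with h3 | h3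
      · linarith
      · omega
  · rw [charDefect, if_neg hj] at hdvd
    exact hn1 ((Int.dvd_add_right ((dvd_pow_self m hlt).mul_left _)).mp hdvd)

theorem weightValue_injOn {m P B : ℤ} {h : ℕ} (hm : 3 ≤ m) (hP : 1 ≤ P) (hh : 3 ≤ h)
    (hB : B = (m + 1) ^ h - m ^ h) {u v : ℕ × Bool} (hu : u.1 ≤ h + 1) (hv : v.1 ≤ h + 1)
    (huv : weightValue m P B h u = weightValue m P B h v) : u = v := by
  have hBlow : 3 * m ^ (h - 1) + 3 * m ^ (h - 2) ≤ B := by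
    obtain ⟨g, rfl⟩ := Nat.exists_eq_add_of_le' hh
    rw [hB]
    exact add_one_pow_sub_pow_lower (by linarith) g
  have hM0 : 1 ≤ m ^ (h - 2) := one_le_pow₀ (by linarith)
  have hM1 : m ^ (h - 1) = m * m ^ (h - 2) := by
    rw [← pow_succ']
    congr 1
    omega
  set M := m ^ (h - 2)
  have hdef : ∀ j, 1 ≤ j → |charDefect m h j| ≤ m * M := fun j hj =>
    hM1 ▸ abs_charDefect_le (by linarith) hj
  have hpos : ∀ j, 1 ≤ j → 0 < P * (B + charDefect m h j) := fun j hj => by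
    have := abs_le.mp (hdef j hj)
    have : 0 < B + charDefect m h j := by nlinarith
    positivity
  have hBpos : 1 < P * (m + 1) * B := by
    have : 3 ≤ B := by nlinarith
    have : 1 ≤ P * (m + 1) := by nlinarith
    nlinarith
  -- the length is smaller than every weight `2 w_s`
  have hlen : ∀ j, 1 ≤ j → P * (m + 1) * B - 1 < 2 * (m * (P * (B + charDefect m h j))) := by
    intro j hj
    have h1 := (abs_le.mp (hdef j hj)).1
    have h2 : 0 < (m - 1) * B + 2 * m * charDefect m h j := by
      have h3 : 0 ≤ (m - 1) * (B - (3 * (m * M) + 3 * M)) :=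
        mul_nonneg (by linarith) (by linarith)
      have h4 : 0 ≤ 2 * m * (charDefect m h j + m * M) :=
        mul_nonneg (by linarith) (by linarith)
      have h5 : 0 < (m * m - 3) * M := mul_pos (by nlinarith) (by linarith)
      nlinarith
    have h6 : 0 < P * ((m - 1) * B + 2 * m * charDefect m h j) := by positivity
    linarith
  -- weights of forms with `b = 0` differ from those with `b ≠ 0`
  have hcross : ∀ i j, 2 * (m * (P * (B + charDefect m h i)))
      ≠ P * (m + 1) * B - 1 + (m - 1) * (P * (B + charDefect m h j)) := by
    intro i j heq
    have hP1 : P ∣ 1 := ⟨(m - 1) * charDefect m h j - 2 * m * charDefect m h i, by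
      linear_combination heq⟩
    have hPe : P = 1 := le_antisymm (Int.le_of_dvd one_pos hP1) hP
    subst hPe
    exact two_mul_charDefect_ne hm (h := h) (i := i) (j := j) (by linear_combination heq)
  have hcancel : ∀ i j : ℕ, i ≤ h + 1 → j ≤ h + 1 → ∀ c : ℤ, c ≠ 0 →
      c * (P * (B + charDefect m h i)) = c * (P * (B + charDefect m h j)) → i = j := by
    intro i j hi hj c hc heq
    have h1 := mul_left_cancel₀ (by linarith : P ≠ 0) (mul_left_cancel₀ hc heq)
    exact charDefect_injOn (m := m) (by linarith) hi hj (by linarith)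
  obtain ⟨i, y⟩ := u
  obtain ⟨j, z⟩ := v
  have hpi := hpos i
  have hpj := hpos j
  have hli := hlen i
  have hlj := hlen j
  simp only at hu hv
  have key : i = j ∧ y = z := by
    cases y <;> cases z <;> simp only [weightValue] at huv <;> split_ifs at huv with h1 h2 h2
    all_goals first
      | exact ⟨by omega, rfl⟩
      | exact absurd huv (hcross _ _)
      | exact absurd huv.symm (hcross _ _)
      | exact ⟨hcancel i j hu hv (m - 1) (by linarith) (by linarith), rfl⟩
      | exact ⟨hcancel i j hu hv (2 * m) (by linarith) (by linarith), rfl⟩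
      | (exfalso
         try have hpi := hpi (by omega)
         try have hpj := hpj (by omega)
         try have hli := hli (by omega)
         try have hlj := hlj (by omega)
         nlinarith)
  exact Prod.ext key.1 key.2

section Weights

variable {ι F : Type*} [Fintype ι] [DecidableEq ι] [Field F] [Fintype F] [DecidableEq F]

theorem card_add_card_eq_weightValue {H : Finset ι} (hH : H.Nonempty) {P B : ℤ}
    (hP : (Fintype.card F : ℤ) ^ (Fintype.card ι - #H) = P * Fintype.card F)
    (hn : (Nat.card {x : ι → F // x ≠ 0 ∧ ∃ i ∈ H, x i = 0} : ℤ) = P * Fintype.card F * B - 1)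
    (a : ι → F) (b : F) :
    (Nat.card {x : ι → F // (x ≠ 0 ∧ ∃ i ∈ H, x i = 0) ∧ ∑ i, x i * a i ≠ 0} : ℤ)
      + Nat.card {x : ι → F // (x ≠ 0 ∧ ∃ i ∈ H, x i = 0) ∧ ∑ i, x i * a i + b ≠ 0}
      = weightValue ((Fintype.card F : ℤ) - 1) P B #H (supportType H a, decide (b = 0)) := by
  set Z : Finset (ι → F) := {x | ∃ i ∈ H, x i = 0} with hZdef
  have hq0 : (Fintype.card F : ℤ) ≠ 0 := by exact_mod_cast Fintype.card_ne_zero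
  have h0Z : (0 : ι → F) ∈ Z := by
    obtain ⟨i, hi⟩ := hH
    simp only [hZdef, mem_filter, mem_univ, true_and]
    exact ⟨i, hi, rfl⟩
  have hset : ∀ p : (ι → F) → Prop, [DecidablePred p] →
      univ.filter (fun x : ι → F => (x ≠ 0 ∧ ∃ i ∈ H, x i = 0) ∧ p x) = (Z.erase 0).filter p := by
    intro p _
    ext x
    simp [hZdef]
  have herase : univ.filter (fun x : ι → F => x ≠ 0 ∧ ∃ i ∈ H, x i = 0) = Z.erase 0 := by
    ext x
    simp [hZdef]
  simp only [Nat.card_eq_fintype_card, Fintype.card_subtype] at hn ⊢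
  rw [herase] at hn
  have hZ : (#Z : ℤ) = P * Fintype.card F * B := by
    rw [← card_erase_add_one h0Z]
    push_cast
    rw [hn]
    ring
  rw [hset, hset]
  by_cases ha : a = 0
  · subst ha
    have ht : supportType H (0 : ι → F) = 0 := supportType_eq_zero_iff.mpr rfl
    rw [ht]
    by_cases hb : b = 0
    · simp [hb, weightValue]
    · simp [hb, weightValue, hn]
  · have ht : supportType H a ≠ 0 := fun h => ha (supportType_eq_zero_iff.mp h)
    set X := P * (B + charDefect ((Fintype.card F : ℤ) - 1) #H (supportType H a)) with hX
    have hlevel : ∀ c : F, c ≠ 0 → (#{x ∈ Z.erase 0 | ∑ i, x i * a i = c} : ℤ) = X := by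
      intro c hc
      have h1 := card_hyperplane_section H ha hc
      rw [← hZdef, hZ, hP] at h1
      have h2 : univ.filter (fun x : ι → F => (∃ i ∈ H, x i = 0) ∧ ∑ i, x i * a i = c)
          = {x ∈ Z.erase 0 | ∑ i, x i * a i = c} := by
        ext x
        simp only [hZdef, mem_filter, mem_univ, true_and, mem_erase]
        refine ⟨fun h => ⟨⟨?_, h.1⟩, h.2⟩, fun h => ⟨h.1.2, h.2⟩⟩
        rintro rfl
        exact hc (by simpa using h.2.symm)
      rw [h2] at h1
      refine mul_left_cancel₀ hq0 (h1.trans ?_)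
      rw [hX]
      ring
    have hfst : (#{x ∈ Z.erase 0 | ∑ i, x i * a i ≠ 0} : ℤ) = ((Fintype.card F : ℤ) - 1) * X := by
      rw [Finset.card_eq_sum_card_fiberwise (f := fun x => ∑ i, x i * a i)
        (t := univ.erase (0 : F)) (fun x hx => by simpa using (mem_filter.mp hx).2)]
      push_cast
      rw [Finset.sum_congr rfl (g := fun _ => X), sum_const, card_erase_of_mem (mem_univ _),
        card_univ, nsmul_eq_mul, Nat.cast_sub Fintype.card_pos, Nat.cast_one]
      intro c hc
      rw [← hlevel c (ne_of_mem_erase hc), filter_filter]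
      congr 2
      ext x
      simp only [mem_filter, and_congr_right_iff, and_iff_right_iff_imp]
      rintro - rfl
      exact ne_of_mem_erase hc
    rw [hfst]
    by_cases hb : b = 0
    · subst hb
      simp only [add_zero, hfst, weightValue, ht, if_false, decide_true]
      ring
    · have hsplit := Finset.card_filter_add_card_filter_not (s := Z.erase 0)
        (fun x => ∑ i, x i * a i = -b)
      have hsnd : (#{x ∈ Z.erase 0 | ∑ i, x i * a i + b ≠ 0} : ℤ) = #(Z.erase 0) - X := by
        rw [← hlevel (-b) (neg_ne_zero.mpr hb), ← hsplit]
        simp only [ne_eq, add_eq_zero_iff_eq_neg]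
        push_cast
        ring
      rw [hsnd, hn]
      simp only [weightValue, ht, hb, if_false, decide_false]
      ring

theorem natCard_supportType_decide (H : Finset ι) (j : ℕ) (z : Bool) :
    Nat.card {r : (ι → F) × F // supportType H r.1 = j ∧ decide (r.2 = 0) = z}
      = #{a : ι → F | supportType H a = j} * if z then 1 else Fintype.card F - 1 := by
  rw [Nat.card_congr (Equiv.subtypeProdEquivProd (p := fun a : ι → F => supportType H a = j)
    (q := fun b : F => decide (b = 0) = z)), Nat.card_prod, Nat.card_eq_fintype_card,
    Nat.card_eq_fintype_card, Fintype.card_subtype, Fintype.card_subtype]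
  congr 1
  cases z
  · simp [Finset.filter_ne', card_erase_of_mem]
  · simp [Finset.filter_eq']

end Weights

theorem stmt19 (q : ℕ) (hq : 3 < q) (F : Type*) [Field F] [Fintype F]
    (hF : Fintype.card F = q)
    (k h : ℕ) (hh : 3 ≤ h) (hhk : h < k)
    (D4 : Set (Fin k → F))
    (hD4 : D4 = {x | x ≠ 0 ∧ ∏ i : Fin h, x (Fin.castLE hhk.le i) = 0})
    (n : ℕ) (hn : n = Nat.card D4)
    (hnval : (n : ℤ) = (q : ℤ) ^ (k - h) * ((q : ℤ) ^ h - ((q : ℤ) - 1) ^ h) - 1)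
    -- the weight of the codeword of C_{[D₄,D₄]~} attached to the pair (f,b)
    (W : ((Fin k → F) →ₗ[F] F) → F → ℕ)
    (hW : ∀ f b, W f b = Nat.card {x : Fin k → F // x ∈ D4 ∧ f x ≠ 0}
      + Nat.card {x : Fin k → F // x ∈ D4 ∧ f x + b ≠ 0})
    -- w = n − q^{k−1} + q^{k−h−1}(q−1)^h + 1
    (w : ℤ) (hw : w = (n : ℤ) - (q : ℤ) ^ (k - 1) + (q : ℤ) ^ (k - h - 1) * ((q : ℤ) - 1) ^ h + 1)
    -- w_s = n − q^{k−1} + q^{k−h}(q−1)^{h−s}ψ_s + 1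
    (ws : ℕ → ℤ)
    (hws : ∀ s, ws s = (n : ℤ) - (q : ℤ) ^ (k - 1)
      + (q : ℤ) ^ (k - h) * ((q : ℤ) - 1) ^ (h - s) * psi q s + 1)
    -- the list of the weights 0, n, 2w, n + w(q−2)/(q−1), 2w_s, n + w_s(q−2)/(q−1)
    (L : List ℤ)
    (hL : L = [0, (n : ℤ), 2 * w, (n : ℤ) + w * ((q : ℤ) - 2) / ((q : ℤ) - 1)]
      ++ (List.ofFn fun s : Fin h => 2 * ws (s + 1))
      ++ (List.ofFn fun s : Fin h => (n : ℤ) + ws (s + 1) * ((q : ℤ) - 2) / ((q : ℤ) - 1))) :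
    -- the listed weights are pairwise distinct
    L.Nodup
    ∧ Nat.card {p : ((Fin k → F) →ₗ[F] F) × F // (W p.1 p.2 : ℤ) = 0} = 1
    ∧ Nat.card {p : ((Fin k → F) →ₗ[F] F) × F // (W p.1 p.2 : ℤ) = (n : ℤ)} = q - 1
    ∧ (∀ s : ℕ, 1 ≤ s → s ≤ h →
        Nat.card {p : ((Fin k → F) →ₗ[F] F) × F // (W p.1 p.2 : ℤ) = 2 * ws s}
          = Nat.choose h s * (q - 1) ^ s)
    ∧ (∀ s : ℕ, 1 ≤ s → s ≤ h →
        Nat.card {p : ((Fin k → F) →ₗ[F] F) × F //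
            (W p.1 p.2 : ℤ) = (n : ℤ) + ws s * ((q : ℤ) - 2) / ((q : ℤ) - 1)}
          = Nat.choose h s * (q - 1) ^ (s + 1))
    ∧ Nat.card {p : ((Fin k → F) →ₗ[F] F) × F // (W p.1 p.2 : ℤ) = 2 * w} = q ^ k - q ^ h
    ∧ Nat.card {p : ((Fin k → F) →ₗ[F] F) × F //
          (W p.1 p.2 : ℤ) = (n : ℤ) + w * ((q : ℤ) - 2) / ((q : ℤ) - 1)}
        = (q ^ k - q ^ h) * (q - 1)
    -- and W takes no other values
    ∧ (∀ p : ((Fin k → F) →ₗ[F] F) × F, (W p.1 p.2 : ℤ) ∈ L) := by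
  classical
  subst hF
  set q := Fintype.card F with hq_def
  set m : ℤ := (q : ℤ) - 1 with hm
  set P : ℤ := (q : ℤ) ^ (k - h - 1) with hP
  set B : ℤ := (q : ℤ) ^ h - m ^ h with hB
  have hm3 : 3 ≤ m := by omega
  have hm0 : m ≠ 0 := by omega
  have hP1 : 1 ≤ P := one_le_pow₀ (by omega)
  have hPq : (q : ℤ) ^ (k - h) = P * q := by
    rw [hP, ← pow_succ]
    congr 1
    omega
  have hPk : (q : ℤ) ^ (k - 1) = P * q ^ h := by
    rw [hP, ← pow_add]
    congr 1
    omega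
  have hw' : w = m * (P * (B + charDefect m h (h + 1))) := by
    rw [hw, hnval, hPk, hPq, charDefect, if_pos rfl, hB, hm]
    ring
  have hws' : ∀ s, s ≤ h → ws s = m * (P * (B + charDefect m h s)) := by
    intro s hs
    have hpsi := mul_psi q s
    rw [← hm] at hpsi
    have hpow : m ^ h = m ^ (h - s) * m ^ s := by
      rw [← pow_add]
      congr 1
      omega
    rw [hws, hnval, hPk, hPq, charDefect, if_neg (by omega)]
    have hBm : B = (q : ℤ) ^ h - m ^ (h - s) * m ^ s := by rw [hB, hpow]
    have hqm : (q : ℤ) = m + 1 := by rw [hm]; ring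
    calc P * q * B - 1 - P * q ^ h + P * q * m ^ (h - s) * psi q s + 1
        = P * q * B - P * q ^ h + P * m ^ (h - s) * (q * psi q s) := by ring
      _ = P * (m + 1) * B - P * (B + m ^ (h - s) * m ^ s)
            + P * m ^ (h - s) * (m ^ s + (-1) ^ s * m) := by
          rw [hpsi, ← hqm]
          linear_combination P * hBm
      _ = _ := by ring
  have hn' : (n : ℤ) = P * (m + 1) * B - 1 := by
    rw [hnval, hPq, hm]
    ring
  have hq2 : (q : ℤ) - 2 = m - 1 := by rw [hm]; ring
  have hdiv : ∀ X : ℤ, m * X * (m - 1) / m = (m - 1) * X := fun X => by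
    rw [mul_assoc, Int.mul_ediv_cancel_left _ hm0, mul_comm]
  have v0t : weightValue m P B h (0, true) = 0 := rfl
  have v0f : weightValue m P B h (0, false) = n := by simp [weightValue, hn']
  have vwt : weightValue m P B h (h + 1, true) = 2 * w := by simp [weightValue, hw']
  have vwf : weightValue m P B h (h + 1, false) = n + w * ((q : ℤ) - 2) / m := by
    rw [hw', hq2, hdiv, hn']
    simp [weightValue]
  have vst : ∀ s, 1 ≤ s → s ≤ h → weightValue m P B h (s, true) = 2 * ws s := by
    intro s h1 h2
    have hs : s ≠ 0 := by omega
    simp [weightValue, hws' s h2, hs]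
  have vsf : ∀ s, 1 ≤ s → s ≤ h →
      weightValue m P B h (s, false) = n + ws s * ((q : ℤ) - 2) / m := by
    intro s h1 h2
    rw [hws' s h2, hq2, hdiv, hn']
    have hs : s ≠ 0 := by omega
    simp [weightValue, hs]
  set H : Finset (Fin k) := univ.map (Fin.castLEEmb hhk.le) with hH
  have hHcard : #H = h := by simp [hH]
  have hHne : H.Nonempty := card_pos.mp (by omega)
  have hmem : ∀ x : Fin k → F, x ∈ D4 ↔ x ≠ 0 ∧ ∃ i ∈ H, x i = 0 := by
    intro x
    simp [hD4, hH, Finset.prod_eq_zero_iff]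
  have hnH : (Nat.card {x : Fin k → F // x ≠ 0 ∧ ∃ i ∈ H, x i = 0} : ℤ) = P * q * B - 1 := by
    rw [← hPq, ← hnval, hn]
    exact congrArg _ (Nat.card_congr (Equiv.subtypeEquivRight fun x => (hmem x).symm))
  set Φ := (Module.piEquiv (Fin k) F F).symm with hΦ
  have happ : ∀ (f : (Fin k → F) →ₗ[F] F) x, f x = ∑ i, x i * Φ f i := by
    intro f x
    have := Module.piEquiv_apply_apply (Fin k) F F (Φ f) x
    rw [hΦ, LinearEquiv.apply_symm_apply] at this
    simpa using this
  have hWval : ∀ f b, (W f b : ℤ) = weightValue m P B h (supportType H (Φ f), decide (b = 0)) := by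
    intro f b
    have h1 := card_add_card_eq_weightValue hHne (P := P) (B := B)
      (by rw [Fintype.card_fin, hHcard, hPq]) hnH (Φ f) b
    rw [hHcard] at h1
    rw [hm, hq_def, ← h1, hW]
    simp only [hmem, happ f]
    push_cast
    rfl
  have hle : ∀ a : Fin k → F, supportType H a ≤ h + 1 := fun a => hHcard ▸ supportType_le H a
  have hinj : ∀ u v : ℕ × Bool, u.1 ≤ h + 1 → v.1 ≤ h + 1 →
      weightValue m P B h u = weightValue m P B h v → u = v := fun u v hu hv =>
    weightValue_injOn hm3 hP1 hh (by rw [hB, hm]; ring) hu hv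
  have hcount : ∀ j z, j ≤ h + 1 →
      Nat.card {p : ((Fin k → F) →ₗ[F] F) × F // (W p.1 p.2 : ℤ) = weightValue m P B h (j, z)}
        = #{a : Fin k → F | supportType H a = j} * if z then 1 else q - 1 := by
    intro j z hj
    rw [← natCard_supportType_decide]
    refine Nat.card_congr ((Φ.toEquiv.prodCongr (Equiv.refl F)).subtypeEquiv fun p => ?_)
    rw [hWval]
    constructor
    · intro heq
      have := hinj _ _ (hle _) hj heq
      exact ⟨congrArg Prod.fst this, congrArg Prod.snd this⟩
    · rintro ⟨h1, h2⟩
      exact congrArg _ (Prod.ext h1 h2)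
  have hcs : ∀ s, s ≤ h → #{a : Fin k → F | supportType H a = s} = h.choose s * (q - 1) ^ s :=
    fun s hs => by rw [card_supportType_eq H (by omega), hHcard]
  have hcw : #{a : Fin k → F | supportType H a = h + 1} = q ^ k - q ^ h := by
    have := card_supportType_eq_succ (F := F) H
    rwa [hHcard, Fintype.card_fin] at this
  set I : List (ℕ × Bool) := [(0, true), (0, false), (h + 1, true), (h + 1, false)]
    ++ (List.ofFn fun s : Fin h => ((s : ℕ) + 1, true))
    ++ (List.ofFn fun s : Fin h => ((s : ℕ) + 1, false)) with hI
  have hmemI : ∀ v, v ∈ I ↔ v.1 ≤ h + 1 := by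
    rintro ⟨j, z⟩
    simp only [hI, List.mem_append, List.mem_cons, List.mem_ofFn, Prod.mk.injEq, List.not_mem_nil,
      or_false]
    constructor
    · rintro ((h1 | h1) | h1)
      · omega
      · obtain ⟨s, hs, -⟩ := h1
        omega
      · obtain ⟨s, hs, -⟩ := h1
        omega
    · intro hj
      rcases Nat.eq_zero_or_pos j with rfl | hj0
      · cases z <;> simp
      rcases Nat.lt_or_ge h j with hj1 | hj1
      · obtain rfl : j = h + 1 := by omega
        cases z <;> simp
      · cases z
        · exact Or.inr ⟨⟨j - 1, by omega⟩, by simp only; omega, rfl⟩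
        · exact Or.inl (Or.inr ⟨⟨j - 1, by omega⟩, by simp only; omega, rfl⟩)
  have hLI : L = I.map (weightValue m P B h) := by
    rw [hL, hI, List.map_append, List.map_append, List.map_ofFn, List.map_ofFn]
    congr 2
    · simp only [List.map_cons, List.map_nil, v0t, v0f, vwt, vwf]
    · congr 1
      funext s
      exact (vst _ (by omega) (by omega)).symm
    · funext s
      exact (vsf _ (by omega) (by omega)).symm
  have hInodup : I.Nodup := by
    have h1 : ∀ z : Bool, (List.ofFn fun s : Fin h => ((s : ℕ) + 1, z)).Nodup := fun z =>
      List.nodup_ofFn.mpr fun s t hst => Fin.ext (by simpa using hst)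
    rw [hI, List.nodup_append, List.nodup_append]
    refine ⟨⟨by simp, h1 true, ?_⟩, h1 false, ?_⟩
    · rintro u hu v hv rfl
      obtain ⟨s, rfl⟩ := List.mem_ofFn.mp hv
      simp at hu
      omega
    · rintro u hu v hv rfl
      obtain ⟨s, rfl⟩ := List.mem_ofFn.mp hv
      simp at hu
      omega
  refine ⟨?_, ?_, ?_, ?_, ?_, ?_, ?_, ?_⟩
  · rw [hLI]
    exact hInodup.map_on fun u hu v hv =>
      hinj u v ((hmemI u).mp hu) ((hmemI v).mp hv)
  · have := hcount 0 true (by omega)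
    rw [v0t, hcs 0 (by omega)] at this
    simpa using this
  · have := hcount 0 false (by omega)
    rw [v0f, hcs 0 (by omega)] at this
    simpa using this
  · intro s h1 h2
    have := hcount s true (by omega)
    rw [vst s h1 h2, hcs s h2] at this
    simpa using this
  · intro s h1 h2
    have := hcount s false (by omega)
    rw [vsf s h1 h2, hcs s h2] at this
    simpa [pow_succ, mul_assoc] using this
  · have := hcount (h + 1) true le_rfl
    rw [vwt, hcw] at this
    simpa using this
  · have := hcount (h + 1) false le_rfl
    rw [vwf, hcw] at this
    simpa using this
  · intro p
    rw [hLI, hWval]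
    exact List.mem_map_of_mem ((hmemI _).mpr (hle _))
end
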